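/- arXiv:2507.18555 — 4 statements merged into one kernel-verified Lean document; each statement's English description precedes it below -/
import Mathlib

section
/- Let d ≥ 1 and let Z be a standard Gaussian random vector in ℝ^d. For all nonzero x, y ∈ ℝ^d, the kernel k(x,y) = E_Z[relu(⟨x,Z⟩)·relu(⟨y,Z⟩)] satisfies k(x,y) = |x||y|/(2π) + ⟨x,y⟩/4 + ⟨x,y⟩²/(4π|x||y|) + (1/(2π))·Σ_{n=1}^∞ C(2n,n)·⟨x,y⟩^{2n+2} / (2^{2n}(2n+1)(2n+2)(|x||y|)^{2n+1}), where C(2n,n) is the central binomial coefficient, and the infinite series converges absolutely. -/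
open MeasureTheory Real

/-- The standard Gaussian measure on `ℝ^d`. -/
noncomputable def stdGaussian (d : ℕ) : Measure (Fin d → ℝ) :=
  Measure.pi fun _ => ProbabilityTheory.gaussianReal 0 1

/-- ReLU activation. -/
def relu (t : ℝ) : ℝ := max t 0

/-- Euclidean inner product on `ℝ^d`. -/
noncomputable def dot {d : ℕ} (x y : Fin d → ℝ) : ℝ := ∑ i, x i * y i

/-- Euclidean norm on `ℝ^d`. -/
noncomputable def vnorm {d : ℕ} (x : Fin d → ℝ) : ℝ := Real.sqrt (∑ i, x i ^ 2)

/-- The neural tangent kernel `k(x,y) = E_Z[relu(⟨x,Z⟩) relu(⟨y,Z⟩)]`. -/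
noncomputable def ntk (d : ℕ) (x y : Fin d → ℝ) : ℝ :=
  ∫ z, relu (dot x z) * relu (dot y z) ∂ stdGaussian d

/-- The `n`-th term of the series part of the NTK expansion. -/
noncomputable def ntkTerm {d : ℕ} (x y : Fin d → ℝ) (n : ℕ) : ℝ :=
  (Nat.choose (2 * n) n : ℝ) * dot x y ^ (2 * n + 2) /
    (2 ^ (2 * n) * (2 * n + 1) * (2 * n + 2) * (vnorm x * vnorm y) ^ (2 * n + 1))

/-- Coefficients of the expansion of `1 / sqrt (1 - t ^ 2)`. -/
noncomputable def ntkCoef (n : ℕ) : ℝ := (Nat.choose (2 * n) n : ℝ) / 2 ^ (2 * n)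

lemma ntkCoef_nonneg (n : ℕ) : 0 ≤ ntkCoef n := by unfold ntkCoef; positivity

lemma ntkCoef_le_one (n : ℕ) : ntkCoef n ≤ 1 := by
  unfold ntkCoef
  rw [div_le_one (by positivity), pow_mul]
  have := Nat.centralBinom_le_four_pow n
  rw [Nat.centralBinom_eq_two_mul_choose] at this
  norm_num
  exact_mod_cast this

lemma ntkCoef_succ (n : ℕ) : (n + 1 : ℝ) * ntkCoef (n + 1) = (n + 1 / 2) * ntkCoef n := by
  unfold ntkCoef
  have h := Nat.succ_mul_centralBinom_succ n
  simp only [Nat.centralBinom_eq_two_mul_choose] at h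
  have h' : (n + 1 : ℝ) * (Nat.choose (2 * (n + 1)) (n + 1) : ℝ)
      = 2 * (2 * n + 1) * (Nat.choose (2 * n) n : ℝ) := by exact_mod_cast h
  rw [← mul_div_assoc, h', show 2 * (n + 1) = 2 * n + 2 from rfl, pow_add]
  field_simp

lemma ring_choose_succ (r : ℝ) (n : ℕ) :
    (n + 1 : ℝ) * Ring.choose r (n + 1) = (r - n) * Ring.choose r n := by
  have h1 := Ring.descPochhammer_eq_factorial_smul_choose r n
  have h2 := Ring.descPochhammer_eq_factorial_smul_choose r (n + 1)
  rw [descPochhammer_succ_right, Polynomial.smeval_mul, h1, Polynomial.smeval_sub,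
    Polynomial.smeval_X, Polynomial.smeval_natCast, Nat.factorial_succ] at h2
  simp only [npow_zero, npow_one, nsmul_eq_mul, mul_one, Nat.cast_mul, Nat.cast_add,
    Nat.cast_one] at h2
  have h3 : (n.factorial : ℝ) ≠ 0 := by positivity
  apply mul_left_cancel₀ h3
  linarith

lemma ring_choose_neg_half (n : ℕ) :
    Ring.choose (-1 / 2 : ℝ) n = (-1) ^ n * ntkCoef n := by
  induction n with
  | zero => simp [ntkCoef]
  | succ n ih =>
    have h1 := ring_choose_succ (-1 / 2) n
    have h2 := ntkCoef_succ n
    have h3 : (n + 1 : ℝ) ≠ 0 := by positivity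
    apply mul_left_cancel₀ h3
    rw [h1, ih, pow_succ]
    linear_combination (-1) ^ n * h2

lemma tsum_ntkCoef {t : ℝ} (ht : |t| < 1) :
    ∑' n, ntkCoef n * t ^ (2 * n) = 1 / √(1 - t ^ 2) := by
  have ht2 : t ^ 2 < 1 := by rw [← sq_abs]; exact pow_lt_one₀ (abs_nonneg _) ht (by norm_num)
  have h := (Real.one_add_rpow_hasFPowerSeriesOnBall_zero (a := -1 / 2)).hasSum (y := -t ^ 2)
    (by
      simp only [Metric.mem_eball, edist_zero_right]
      rw [← ofReal_norm, norm_neg, Real.norm_of_nonneg (sq_nonneg t)]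
      rw [← ENNReal.ofReal_one]
      exact (ENNReal.ofReal_lt_ofReal_iff one_pos).2 ht2)
  have h2 := h.tsum_eq
  simp only [binomialSeries_apply, List.ofFn_const, List.prod_replicate, zero_add,
    ring_choose_neg_half] at h2
  rw [show (fun n => ntkCoef n * t ^ (2 * n)) =
    fun n => ((-1) ^ n * ntkCoef n) • (-t ^ 2) ^ n from ?_, h2]
  · rw [show (-1 / 2 : ℝ) = -(1 / 2) by norm_num, rpow_neg (by linarith), ← sqrt_eq_rpow, one_div]
    rfl
  · funext n
    rw [neg_pow (t ^ 2), pow_mul, smul_eq_mul]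
    have : ((-1 : ℝ) ^ n) * (-1) ^ n = 1 := by rw [← mul_pow]; norm_num
    linear_combination (-(ntkCoef n * (t ^ 2) ^ n)) * this

lemma hasDerivAt_series (b : ℕ → ℝ) (hb : ∀ n, |b n| ≤ 1) (m : ℕ) {t : ℝ} (ht : |t| < 1) :
    HasDerivAt (fun s => ∑' n, b n / (2 * n + m + 1) * s ^ (2 * n + m + 1))
      (∑' n, b n * t ^ (2 * n + m)) t := by
  obtain ⟨r, hr1, hr2⟩ := exists_between ht
  have hr0 : 0 < r := (abs_nonneg t).trans_lt hr1
  refine hasDerivAt_tsum_of_isPreconnected (u := fun n => r ^ n) (t := Set.Ioo (-r) r) (y₀ := (0 : ℝ))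
    (g := fun n s => b n / (2 * n + m + 1) * s ^ (2 * n + m + 1))
    (g' := fun n s => b n * s ^ (2 * n + m))
    (summable_geometric_of_lt_one hr0.le hr2) isOpen_Ioo isPreconnected_Ioo ?_ ?_ ?_ ?_ ?_
  · intro n y _
    have := (hasDerivAt_pow (2 * n + m + 1) y).const_mul (b n / (2 * n + m + 1))
    refine this.congr_deriv ?_
    have : (2 * n + m + 1 : ℝ) ≠ 0 := by positivity
    push_cast
    field_simp
  · intro n y hy
    rw [norm_mul, norm_pow, Real.norm_eq_abs, Real.norm_eq_abs]
    have hy' : |y| ≤ r := (abs_lt.2 hy).le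
    calc |b n| * |y| ^ (2 * n + m) ≤ 1 * r ^ (2 * n + m) := by
          gcongr; exact hb n
      _ ≤ r ^ n := by
          rw [one_mul]; exact pow_le_pow_of_le_one hr0.le hr2.le (by omega)
  · exact ⟨by linarith, hr0⟩
  · simp
  · exact abs_lt.1 hr1

lemma eq_of_deriv_eq {f g f' : ℝ → ℝ} (hf : ∀ t, |t| < 1 → HasDerivAt f (f' t) t)
    (hg : ∀ t, |t| < 1 → HasDerivAt g (f' t) t) (h0 : f 0 = g 0) {t : ℝ} (ht : |t| < 1) :
    f t = g t := by
  have hm : ∀ t, t ∈ Set.Ioo (-1 : ℝ) 1 → |t| < 1 := fun t ht => abs_lt.2 ht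
  refine isOpen_Ioo.eqOn_of_deriv_eq (s := Set.Ioo (-1 : ℝ) 1) isPreconnected_Ioo
    (fun s hs => (hf s (hm s hs)).differentiableAt.differentiableWithinAt)
    (fun s hs => (hg s (hm s hs)).differentiableAt.differentiableWithinAt)
    (fun s hs => by rw [(hf s (hm s hs)).deriv, (hg s (hm s hs)).deriv])
    (x := 0) (by simp) h0 (abs_lt.1 ht)

lemma tsum_arcsin {t : ℝ} (ht : |t| < 1) :
    ∑' n : ℕ, ntkCoef n / (2 * n + 1) * t ^ (2 * n + 1) = arcsin t := by
  refine eq_of_deriv_eq (f' := fun t => 1 / √(1 - t ^ 2))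
    (f := fun t => ∑' n : ℕ, ntkCoef n / (2 * n + 1) * t ^ (2 * n + 1)) ?_ ?_ ?_ ht
  · intro t ht
    have := hasDerivAt_series ntkCoef (fun n => by
      rw [abs_of_nonneg (ntkCoef_nonneg n)]; exact ntkCoef_le_one n) 0 ht
    simp only [Nat.cast_zero, add_zero] at this
    rwa [tsum_ntkCoef ht] at this
  · intro t ht
    have := abs_lt.1 ht
    exact hasDerivAt_arcsin (by linarith) (by linarith)
  · simp

/-- Terms of the expansion of `sqrt (1 - t ^ 2) + t * arcsin t - 1`. -/
noncomputable def ntkS (t : ℝ) (n : ℕ) : ℝ :=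
  ntkCoef n / (2 * n + 1) / (2 * n + (1 : ℕ) + 1) * t ^ (2 * n + 1 + 1)

lemma ntkS_bound {t : ℝ} (ht : |t| ≤ 1) (n : ℕ) : ‖ntkS t n‖ ≤ 1 / ((n + 1 : ℕ) : ℝ) ^ 2 := by
  unfold ntkS
  rw [norm_mul, norm_pow, Real.norm_eq_abs t, Real.norm_of_nonneg (by
    have := ntkCoef_nonneg n; positivity), div_div]
  have h1 : |t| ^ (2 * n + 1 + 1) ≤ 1 := pow_le_one₀ (abs_nonneg _) ht
  have h2 := ntkCoef_nonneg n
  calc _ ≤ ntkCoef n / ((2 * n + 1) * (2 * n + (1 : ℕ) + 1)) * 1 := by gcongr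
    _ ≤ 1 / ((n + 1 : ℕ) : ℝ) ^ 2 := by
      rw [mul_one]
      apply div_le_div₀ zero_le_one (ntkCoef_le_one n) (by positivity)
      push_cast
      nlinarith [(Nat.cast_nonneg n : (0 : ℝ) ≤ n)]

lemma summable_bound : Summable (fun n : ℕ => 1 / ((n + 1 : ℕ) : ℝ) ^ 2) :=
  (summable_nat_add_iff (f := fun n : ℕ => 1 / (n : ℝ) ^ 2) 1).2
    (Real.summable_one_div_nat_pow.2 one_lt_two)

lemma ntkS_summable {t : ℝ} (ht : |t| ≤ 1) : Summable (fun n => |ntkS t n|) :=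
  Summable.of_nonneg_of_le (fun _ => abs_nonneg _) (ntkS_bound ht) summable_bound

lemma tsum_ntkS_lt {t : ℝ} (ht : |t| < 1) :
    ∑' n, ntkS t n = √(1 - t ^ 2) + t * arcsin t - 1 := by
  refine eq_of_deriv_eq (f' := arcsin)
    (f := fun t => ∑' n, ntkS t n) (g := fun t => √(1 - t ^ 2) + t * arcsin t - 1) ?_ ?_ ?_ ht
  · intro t ht
    have := hasDerivAt_series (fun n => ntkCoef n / (2 * n + 1)) (fun n => by
      have h := ntkCoef_nonneg n
      rw [abs_of_nonneg (by positivity)]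
      rw [div_le_one (by positivity)]
      have := ntkCoef_le_one n
      have : (0 : ℝ) ≤ n := Nat.cast_nonneg n
      linarith) 1 ht
    rwa [tsum_arcsin ht] at this
  · intro t ht
    have := abs_lt.1 ht
    have h1 : 0 < 1 - t ^ 2 := by nlinarith
    have h2 := ((((hasDerivAt_pow 2 t).const_sub 1).sqrt h1.ne').add
      ((hasDerivAt_id t).mul (hasDerivAt_arcsin (x := t) (by linarith) (by linarith)))).sub_const 1
    refine h2.congr_deriv ?_
    have h3 : √(1 - t ^ 2) ≠ 0 := (sqrt_pos.2 h1).ne'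
    simp
    field_simp
    ring
  · simp [ntkS]

lemma tsum_ntkS {t : ℝ} (ht : |t| ≤ 1) :
    ∑' n, ntkS t n = √(1 - t ^ 2) + t * arcsin t - 1 := by
  have hc : ContinuousOn (fun t => ∑' n, ntkS t n) (Set.Icc (-1) 1) :=
    continuousOn_tsum (fun n => by unfold ntkS; fun_prop) summable_bound
      (fun n t ht => ntkS_bound (abs_le.2 ht) n)
  have hc' : ContinuousOn (fun t => √(1 - t ^ 2) + t * arcsin t - 1) (Set.Icc (-1) 1) := by
    fun_prop
  have h : Set.EqOn (fun t => ∑' n, ntkS t n) (fun t => √(1 - t ^ 2) + t * arcsin t - 1)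
      (Set.Ioo (-1) 1) := fun s hs => tsum_ntkS_lt (abs_lt.2 hs)
  exact h.of_subset_closure hc hc' Set.Ioo_subset_Icc_self
    (by rw [closure_Ioo (by norm_num)]) (abs_le.1 ht)

lemma angular_integral {α : ℝ} (h0 : 0 ≤ α) (h1 : α ≤ π) :
    ∫ φ in Set.Ioo (-π) π, relu (cos φ) * relu (cos (φ - α))
      = ((π - α) * cos α + sin α) / 2 := by
  have hpi := pi_pos
  have hsub : Set.Ioc (α - π / 2) (π / 2) ⊆ Set.Ioo (-π) π := by
    intro φ hφ
    exact ⟨by linarith [hφ.1], by linarith [hφ.2]⟩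
  have hz : ∀ φ ∈ Set.Ioo (-π) π \ Set.Ioc (α - π / 2) (π / 2),
      relu (cos φ) * relu (cos (φ - α)) = 0 := by
    rintro φ ⟨⟨ha, hb⟩, hc⟩
    by_cases h2 : π / 2 < φ
    · have : cos φ ≤ 0 := cos_nonpos_of_pi_div_two_le_of_le h2.le (by linarith)
      simp [relu, this]
    · push Not at h2
      have h3 : φ ≤ α - π / 2 := by
        by_contra h4
        exact hc ⟨by linarith, h2⟩
      by_cases h5 : φ ≤ -(π / 2)
      · have : cos φ ≤ 0 := by
          rw [← cos_neg]
          exact cos_nonpos_of_pi_div_two_le_of_le (by linarith) (by linarith)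
        simp [relu, this]
      · push Not at h5
        have : cos (φ - α) ≤ 0 := by
          rw [← cos_neg]
          exact cos_nonpos_of_pi_div_two_le_of_le (by linarith) (by linarith)
        simp [relu, this]
  rw [setIntegral_eq_of_subset_of_forall_sdiff_eq_zero measurableSet_Ioo hsub hz,
    setIntegral_congr_fun (g := fun φ => cos φ * cos (φ - α)) measurableSet_Ioc ?_,
    ← intervalIntegral.integral_of_le (by linarith)]
  · have hd : ∀ φ ∈ Set.uIcc (α - π / 2) (π / 2),
        HasDerivAt (fun φ => φ * cos α / 2 + sin (2 * φ - α) / 4) (cos φ * cos (φ - α)) φ := by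
      intro φ _
      have h := (((hasDerivAt_id φ).mul_const (cos α)).div_const 2).add
        (((((hasDerivAt_id φ).const_mul 2).sub_const α).sin).div_const 4)
      refine h.congr_deriv ?_
      simp only [id]
      have e1 : cos (2 * φ - α) = cos φ * cos (φ - α) - sin φ * sin (φ - α) := by
        rw [← cos_add]; congr 1; ring
      have e2 : cos α = cos φ * cos (φ - α) + sin φ * sin (φ - α) := by
        rw [← cos_sub]; congr 1; ring
      rw [e1, e2]; ring
    rw [intervalIntegral.integral_eq_sub_of_hasDerivAt hd
      (Continuous.intervalIntegrable (by fun_prop) _ _)]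
    rw [show 2 * (π / 2) - α = π - α by ring, show 2 * (α - π / 2) - α = -(π - α) by ring,
      sin_neg, sin_pi_sub]
    ring
  · rintro φ ⟨ha, hb⟩
    have c1 : 0 ≤ cos φ := cos_nonneg_of_neg_pi_div_two_le_of_le (by linarith) hb
    have c2 : 0 ≤ cos (φ - α) :=
      cos_nonneg_of_neg_pi_div_two_le_of_le (by linarith) (by linarith)
    simp [relu, c1, c2]

lemma radial_integral : ∫ r in Set.Ioi (0 : ℝ), r ^ 3 * exp (-r ^ 2 / 2) = 2 := by
  have h := integral_rpow_mul_exp_neg_mul_rpow (p := 2) (q := 3) (b := 1 / 2)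
    (by norm_num) (by norm_num) (by norm_num)
  have e : ∀ r : ℝ, r ^ (3 : ℝ) * exp (-(1 / 2) * r ^ (2 : ℝ)) = r ^ 3 * exp (-r ^ 2 / 2) := by
    intro r
    rw [show (3 : ℝ) = ((3 : ℕ) : ℝ) by norm_num, show (2 : ℝ) = ((2 : ℕ) : ℝ) by norm_num,
      rpow_natCast, rpow_natCast]
    congr 2
    push_cast
    ring
  simp_rw [e] at h
  rw [h, show (-(3 + 1) / 2 : ℝ) = -((2 : ℕ) : ℝ) by norm_num, rpow_neg (by norm_num),
    rpow_natCast, show ((3 : ℝ) + 1) / 2 = 1 + 1 by norm_num, Gamma_add_one one_ne_zero, Gamma_one]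
  norm_num

lemma relu_mul {r : ℝ} (hr : 0 ≤ r) (t : ℝ) : relu (r * t) = r * relu t := by
  unfold relu
  rw [mul_max_of_nonneg _ _ hr, mul_zero]

lemma planar_integral {α : ℝ} (h0 : 0 ≤ α) (h1 : α ≤ π) :
    ∫ p : ℝ × ℝ, relu p.1 * relu (cos α * p.1 + sin α * p.2)
      ∂((ProbabilityTheory.gaussianReal 0 1).prod (ProbabilityTheory.gaussianReal 0 1))
      = ((π - α) * cos α + sin α) / (2 * π) := by
  have hm := ProbabilityTheory.measurable_gaussianPDF 0 1
  rw [ProbabilityTheory.gaussianReal_of_var_ne_zero 0 one_ne_zero, prod_withDensity hm hm,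
    integral_withDensity_eq_integral_toReal_smul (by fun_prop)
      (Filter.Eventually.of_forall fun p => ENNReal.mul_lt_top
        ProbabilityTheory.gaussianPDF_lt_top ProbabilityTheory.gaussianPDF_lt_top),
    ← Measure.volume_eq_prod, ← integral_comp_polarCoord_symm]
  have key : ∀ p ∈ polarCoord.target, p.1 • (((ProbabilityTheory.gaussianPDF 0 1
      (polarCoord.symm p).1) * (ProbabilityTheory.gaussianPDF 0 1
      (polarCoord.symm p).2)).toReal • (relu (polarCoord.symm p).1 *
        relu (cos α * (polarCoord.symm p).1 + sin α * (polarCoord.symm p).2)))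
      = (1 / (2 * π) * (p.1 ^ 3 * exp (-p.1 ^ 2 / 2))) * (relu (cos p.2) * relu (cos (p.2 - α))) := by
    rintro ⟨r, φ⟩ hp
    have hr : 0 < r := hp.1
    simp only [polarCoord_symm_apply, ENNReal.toReal_mul, ProbabilityTheory.toReal_gaussianPDF,
      smul_eq_mul]
    rw [show cos α * (r * cos φ) + sin α * (r * sin φ) = r * cos (φ - α) by rw [cos_sub]; ring,
      relu_mul hr.le, relu_mul hr.le]
    simp only [ProbabilityTheory.gaussianPDFReal, NNReal.coe_one, mul_one, sub_zero]
    have e : exp (-(r * cos φ) ^ 2 / 2) * exp (-(r * sin φ) ^ 2 / 2) = exp (-r ^ 2 / 2) := by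
      rw [← exp_add]; congr 1
      linear_combination (-r ^ 2 / 2) * (sin_sq_add_cos_sq φ)
    have e2 : (√(2 * π))⁻¹ * (√(2 * π))⁻¹ = 1 / (2 * π) := by
      rw [← mul_inv, mul_self_sqrt (by positivity), one_div]
    rw [← e, ← e2]
    ring
  rw [setIntegral_congr_fun polarCoord.open_target.measurableSet key]
  rw [show polarCoord.target = Set.Ioi (0 : ℝ) ×ˢ Set.Ioo (-π) π from rfl,
    Measure.volume_eq_prod, setIntegral_prod_mul (fun r : ℝ => 1 / (2 * π) * (r ^ 3 * exp (-r ^ 2 / 2)))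
      (fun φ => relu (cos φ) * relu (cos (φ - α))), integral_const_mul, radial_integral,
    angular_integral h0 h1]
  field_simp

lemma charFunDual_gauss (L : StrongDual ℝ ℝ) :
    charFunDual (ProbabilityTheory.gaussianReal 0 1) L = Complex.exp (-((L 1 ^ 2 : ℝ) : ℂ) / 2) := by
  rw [charFunDual_eq_charFun_map_one, ProbabilityTheory.gaussianReal_map_continuousLinearMap,
    ProbabilityTheory.charFun_gaussianReal]
  congr 1
  simp [max_eq_left (sq_nonneg (L 1))]
  ring

lemma map_eq {d : ℕ} (x y : Fin d → ℝ) {α : ℝ}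
    (hα : dot x y = vnorm x * vnorm y * cos α) :
    (stdGaussian d).map (fun z => (dot x z, dot y z)) =
    ((ProbabilityTheory.gaussianReal 0 1).prod (ProbabilityTheory.gaussianReal 0 1)).map
      (fun p => (vnorm x * p.1, vnorm y * (cos α * p.1 + sin α * p.2))) := by
  let T1 (w : Fin d → ℝ) : (Fin d → ℝ) →L[ℝ] ℝ := ∑ i, w i • ContinuousLinearMap.proj i
  have hT1 : ∀ w z, T1 w z = dot w z := by
    intro w z; simp [T1, dot]
  let T : (Fin d → ℝ) →L[ℝ] ℝ × ℝ := (T1 x).prod (T1 y)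
  let S : ℝ × ℝ →L[ℝ] ℝ × ℝ :=
    (vnorm x • ContinuousLinearMap.fst ℝ ℝ ℝ).prod
      (vnorm y • (cos α • ContinuousLinearMap.fst ℝ ℝ ℝ + sin α • ContinuousLinearMap.snd ℝ ℝ ℝ))
  have hT : (fun z => (dot x z, dot y z)) = T := by
    funext z; simp [T, hT1]
  have hS : (fun p : ℝ × ℝ => (vnorm x * p.1, vnorm y * (cos α * p.1 + sin α * p.2))) = S := by
    funext z; simp [S, mul_add]
  rw [hT, hS]
  have : IsProbabilityMeasure (stdGaussian d) := by unfold stdGaussian; infer_instance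
  have := Measure.isProbabilityMeasure_map (μ := stdGaussian d) (f := T) (by fun_prop)
  have := Measure.isProbabilityMeasure_map (μ := (ProbabilityTheory.gaussianReal 0 1).prod
    (ProbabilityTheory.gaussianReal 0 1)) (f := S) (by fun_prop)
  apply Measure.ext_of_charFunDual
  funext L
  rw [charFunDual_map, charFunDual_map, stdGaussian, charFunDual_pi, charFunDual_prod]
  simp_rw [charFunDual_gauss]
  rw [← Complex.exp_sum, ← Complex.exp_add]
  congr 1
  have hL : ∀ a b, L (a, b) = a * L (1, 0) + b * L (0, 1) := by
    intro a b
    have : ((a, b) : ℝ × ℝ) = a • (1, 0) + b • (0, 1) := by simp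
    rw [this, map_add, map_smul, map_smul]; rfl
  have hTi : ∀ i, T (Pi.single i 1) = (x i, y i) := by
    intro i; rw [← hT]; simp [dot, Pi.single_apply]
  have hx : vnorm x ^ 2 = ∑ i, x i ^ 2 := sq_sqrt (Finset.sum_nonneg fun i _ => sq_nonneg _)
  have hy : vnorm y ^ 2 = ∑ i, y i ^ 2 := sq_sqrt (Finset.sum_nonneg fun i _ => sq_nonneg _)
  have e1 : ∀ i, (((L.comp T).comp (ContinuousLinearMap.single ℝ (fun _ : Fin d => ℝ) i)) 1) =
      x i * L (1, 0) + y i * L (0, 1) := by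
    intro i
    rw [← hL, ← hTi]; rfl
  have e2 : ((L.comp S).comp (ContinuousLinearMap.inl ℝ ℝ ℝ)) 1 =
      vnorm x * L (1, 0) + vnorm y * cos α * L (0, 1) := by
    rw [← hL]; simp [S]
  have e3 : ((L.comp S).comp (ContinuousLinearMap.inr ℝ ℝ ℝ)) 1 =
      vnorm y * sin α * L (0, 1) := by
    have := hL 0 (vnorm y * sin α)
    rw [zero_mul, zero_add] at this
    rw [← this]; simp [S]
  simp_rw [e1]
  rw [e2, e3]
  have main : ∑ i, (x i * L (1, 0) + y i * L (0, 1)) ^ 2 =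
      (vnorm x * L (1, 0) + vnorm y * cos α * L (0, 1)) ^ 2 + (vnorm y * sin α * L (0, 1)) ^ 2 := by
    have : ∑ i, (x i * L (1, 0) + y i * L (0, 1)) ^ 2 =
        (∑ i, x i ^ 2) * L (1, 0) ^ 2 + 2 * dot x y * L (1, 0) * L (0, 1)
          + (∑ i, y i ^ 2) * L (0, 1) ^ 2 := by
      simp only [dot, Finset.sum_mul, Finset.mul_sum, ← Finset.sum_add_distrib]
      exact Finset.sum_congr rfl fun i _ => by ring
    rw [this, hα, ← hx, ← hy]
    linear_combination (-(vnorm y ^ 2 * L (0, 1) ^ 2)) * sin_sq_add_cos_sq α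
  rw [← Finset.sum_div, Finset.sum_neg_distrib, ← Complex.ofReal_sum, main]
  push_cast
  ring

lemma vnorm_pos {d : ℕ} {x : Fin d → ℝ} (hx : x ≠ 0) : 0 < vnorm x := by
  obtain ⟨i, hi⟩ := Function.ne_iff.1 hx
  refine sqrt_pos.2 (Finset.sum_pos' (fun i _ => sq_nonneg _) ⟨i, Finset.mem_univ i, ?_⟩)
  exact sq_pos_of_ne_zero hi

theorem ntk_expansion (d : ℕ) (hd : 1 ≤ d) (x y : Fin d → ℝ) (hx : x ≠ 0) (hy : y ≠ 0) :
    Summable (fun n : ℕ => |ntkTerm x y (n + 1)|) ∧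
    ntk d x y =
      vnorm x * vnorm y / (2 * π) + dot x y / 4
        + dot x y ^ 2 / (4 * π * (vnorm x * vnorm y))
        + (1 / (2 * π)) * ∑' n : ℕ, ntkTerm x y (n + 1) := by
  have hX := vnorm_pos hx
  have hY := vnorm_pos hy
  have hN : 0 < vnorm x * vnorm y := mul_pos hX hY
  obtain ⟨ρ, hρ⟩ : ∃ ρ, ρ = dot x y / (vnorm x * vnorm y) := ⟨_, rfl⟩
  have hdot : dot x y = vnorm x * vnorm y * ρ := by rw [hρ]; field_simp
  have hρ1 : |ρ| ≤ 1 := by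
    have hcs : dot x y ^ 2 ≤ (vnorm x * vnorm y) ^ 2 := by
      rw [mul_pow, vnorm, vnorm, sq_sqrt (Finset.sum_nonneg fun i _ => sq_nonneg _),
        sq_sqrt (Finset.sum_nonneg fun i _ => sq_nonneg _)]
      exact Finset.sum_mul_sq_le_sq_mul_sq _ _ _
    rw [hρ, abs_div, abs_of_pos hN, div_le_one hN]
    exact abs_le_of_sq_le_sq hcs hN.le
  have hterm : ∀ n, ntkTerm x y n = vnorm x * vnorm y * ntkS ρ n := by
    intro n
    unfold ntkTerm ntkS ntkCoef
    rw [hdot]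
    generalize vnorm x * vnorm y = N at hN
    push_cast
    have : N ≠ 0 := hN.ne'
    rw [show 2 * n + 2 = 2 * n + 1 + 1 from rfl, mul_pow, pow_succ N (2 * n + 1)]
    field_simp
    ring
  have hs := ntkS_summable hρ1
  refine ⟨?_, ?_⟩
  · have h := ((summable_nat_add_iff 1).2 hs).mul_left (vnorm x * vnorm y)
    refine h.congr fun n => ?_
    rw [hterm, abs_mul, abs_of_pos hN]
  have hsum : ∑' n, ntkTerm x y (n + 1) =
      vnorm x * vnorm y * (√(1 - ρ ^ 2) + ρ * arcsin ρ - 1 - ρ ^ 2 / 2) := by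
    simp_rw [hterm]
    rw [tsum_mul_left]
    congr 1
    have h := hs.of_abs.tsum_eq_zero_add
    rw [tsum_ntkS hρ1] at h
    have h0 : ntkS ρ 0 = ρ ^ 2 / 2 := by simp [ntkS, ntkCoef]; ring
    rw [h, h0]
    ring
  have hcos : cos (arccos ρ) = ρ := cos_arccos (abs_le.1 hρ1).1 (abs_le.1 hρ1).2
  have hk : ntk d x y = vnorm x * vnorm y *
      (((π - arccos ρ) * ρ + √(1 - ρ ^ 2)) / (2 * π)) := by
    have hpl := planar_integral (arccos_nonneg ρ) (arccos_le_pi ρ)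
    have hmap := map_eq x y (α := arccos ρ) (by rw [hcos, hdot])
    rw [hcos, sin_arccos] at hpl hmap
    rw [← hpl, ← integral_const_mul]
    have hdm : ∀ w : Fin d → ℝ, Measurable (dot w) := by
      intro w; unfold dot; fun_prop
    have hrm : Measurable relu := by unfold relu; fun_prop
    have hF : Measurable (fun p : ℝ × ℝ => relu p.1 * relu p.2) := by fun_prop
    have i1 := integral_map (μ := stdGaussian d) (φ := fun z => (dot x z, dot y z))
      (f := fun p : ℝ × ℝ => relu p.1 * relu p.2)
      ((hdm x).prodMk (hdm y)).aemeasurable hF.aestronglyMeasurable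
    rw [hmap, integral_map (by fun_prop) hF.aestronglyMeasurable] at i1
    unfold ntk
    rw [← i1]
    refine integral_congr_ae (Filter.Eventually.of_forall fun p => ?_)
    simp only [relu_mul hX.le, relu_mul hY.le]
    ring
  rw [hk, hsum, hdot, arccos]
  have := pi_pos
  field_simp
  ring
end

section
/- Let d ≥ 2 and let k(x,y) = E_Z[relu(⟨x,Z⟩)·relu(⟨y,Z⟩)] with Z standard Gaussian in ℝ^d. Define F_0(x) = |x|/√d, F_l(x) = x_l for 1 ≤ l ≤ d, F_γ(x) = (√(d+2)/√2)·( x_γ²/|x| − |x|/d − (1/(√d+1))(x_d²/|x| − |x|/d) ) for 1 ≤ γ ≤ d−1, and F_{αβ}(x) = √(d+2)·x_α x_β/|x| for 1 ≤ α < β ≤ d. Then for all nonzero x, y: k(x,y) = ((2d+1)/(4π))·F_0(x)F_0(y) + (1/4)·Σ_{l=1}^d F_l(x)F_l(y) + (1/(2π(d+2)))·( Σ_{γ=1}^{d−1} F_γ(x)F_γ(y) + Σ_{α<β} F_{αβ}(x)F_{αβ}(y) ) + r(x,y), where r(x,y) = (1/(2π))·Σ_{n=1}^∞ C(2n,n)·⟨x,y⟩^{2n+2}/(2^{2n}(2n+1)(2n+2)(|x||y|)^{2n+1})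 and this series converges absolutely. -/
open MeasureTheory Real

/-- Remainder kernel `r(x,y)`. -/
noncomputable def rker {d : ℕ} (x y : Fin d → ℝ) : ℝ :=
  (1 / (2 * π)) * ∑' n : ℕ, ntkTerm x y (n + 1)

noncomputable def F0 (d : ℕ) (x : Fin d → ℝ) : ℝ := vnorm x / Real.sqrt d

noncomputable def Fl (d : ℕ) (l : Fin d) (x : Fin d → ℝ) : ℝ := x l

/-- `F_γ`, where the last coordinate (index `d` in one-based notation) is `⟨d-1, _⟩`. -/
noncomputable def Fgam (d : ℕ) (hd : 0 < d) (γ : Fin d) (x : Fin d → ℝ) : ℝ :=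
  (Real.sqrt (d + 2) / Real.sqrt 2) *
    (x γ ^ 2 / vnorm x - vnorm x / d
      - (1 / (Real.sqrt d + 1)) *
        (x ⟨d - 1, Nat.sub_lt hd one_pos⟩ ^ 2 / vnorm x - vnorm x / d))

noncomputable def Fab (d : ℕ) (α β : Fin d) (x : Fin d → ℝ) : ℝ :=
  Real.sqrt (d + 2) * x α * x β / vnorm x

lemma aux_choose (n : ℕ) : Ring.choose ((1/2 : ℂ) + n - 1) n = (Nat.choose (2*n) n : ℂ) / 4 ^ n := by
  rw [← Ring.multichoose_eq]
  have h := Ring.factorial_nsmul_multichoose_eq_ascPochhammer (1/2 : ℂ) n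
  rw [Polynomial.ascPochhammer_smeval_eq_eval, nsmul_eq_mul] at h
  have h2 : ∀ n : ℕ, (ascPochhammer ℂ n).eval (1/2 : ℂ) = n.factorial * ((Nat.choose (2*n) n : ℂ) / 4 ^ n) := by
    intro n
    induction n with
    | zero => simp
    | succ k ih =>
      rw [ascPochhammer_succ_eval, ih]
      have h3 := Nat.succ_mul_centralBinom_succ k
      simp only [Nat.centralBinom_eq_two_mul_choose] at h3
      have h4 : ((k:ℂ)+1) * ((Nat.choose (2*(k+1)) (k+1) : ℕ) : ℂ) = 2 * (2*k+1) * ((Nat.choose (2*k) k : ℕ) : ℂ) := by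
        exact_mod_cast h3
      rw [Nat.factorial_succ]
      push_cast
      have : (4:ℂ)^k ≠ 0 := pow_ne_zero _ (by norm_num)
      rw [pow_succ]
      field_simp
      linear_combination (-2) * (k.factorial : ℂ) * h4
  rw [h2 n] at h
  exact mul_left_cancel₀ (by exact_mod_cast Nat.factorial_ne_zero n) h

lemma aux_sqrt_series (t : ℝ) (h0 : 0 ≤ t) (ht : t < 1) :
    HasSum (fun n : ℕ => (Nat.choose (2*n) n : ℝ) / 4 ^ n * t ^ n) (1 / √(1 - t)) := by
  have h := Complex.one_div_one_sub_cpow_hasFPowerSeriesOnBall_zero (1/2 : ℂ)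
  have hm : (t : ℂ) ∈ Metric.eball (0:ℂ) 1 := by
    rw [Metric.mem_eball, edist_zero_right, enorm_eq_nnnorm]
    norm_cast
    rw [← NNReal.coe_lt_coe]
    simpa [abs_of_nonneg h0] using ht
  have h2 := h.hasSum hm
  simp only [FormalMultilinearSeries.ofScalars_apply_eq, aux_choose, zero_add, smul_eq_mul] at h2
  have h3 : (1 / (1 - (t:ℂ)) ^ (1/2 : ℂ)) = ((1 / √(1-t) : ℝ) : ℂ) := by
    rw [Real.sqrt_eq_rpow]
    push_cast [Complex.ofReal_cpow (by linarith : (0:ℝ) ≤ 1 - t)]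
    rfl
  rw [h3] at h2
  rw [← Complex.hasSum_ofReal]
  simpa using h2

lemma aux_coef_le (n : ℕ) : (Nat.choose (2*n) n : ℝ) / 4 ^ n ≤ 1 := by
  rw [div_le_one (by positivity)]
  exact_mod_cast Nat.centralBinom_le_four_pow n

lemma aux_coef_nonneg (n : ℕ) : 0 ≤ (Nat.choose (2*n) n : ℝ) / 4 ^ n := by positivity

lemma aux_sum0 (r : ℝ) (h0 : 0 ≤ r) (hr : r < 1) : Summable (fun n : ℕ => r ^ (2*n)) := by
  simp_rw [pow_mul]
  exact summable_geometric_of_lt_one (by positivity) (by nlinarith)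

lemma aux_arcsin (x : ℝ) (hx : |x| < 1) :
    ∑' n : ℕ, (Nat.choose (2*n) n : ℝ) / 4 ^ n * (x ^ (2*n+1) / (2*n+1)) = arcsin x := by
  obtain ⟨r, hr1, hr2⟩ := exists_between hx
  have hr0 : 0 < r := lt_of_le_of_lt (abs_nonneg _) hr1
  have hd : ∀ y ∈ Metric.ball (0:ℝ) r, HasDerivAt (fun z => (∑' n : ℕ, (Nat.choose (2*n) n : ℝ) / 4 ^ n * (z ^ (2*n+1) / (2*n+1))) - arcsin z) 0 y := by
    intro y hy
    have hy' : |y| < r := by simpa using hy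
    have e1 : HasDerivAt (fun z => (∑' n : ℕ, (Nat.choose (2*n) n : ℝ) / 4 ^ n * (z ^ (2*n+1) / (2*n+1)))) (∑' n : ℕ, (Nat.choose (2*n) n : ℝ) / 4 ^ n * y ^ (2*n)) y := by
      refine hasDerivAt_tsum_of_isPreconnected (g' := fun n y => (Nat.choose (2*n) n : ℝ) / 4 ^ n * y ^ (2*n)) (aux_sum0 r hr0.le hr2) Metric.isOpen_ball
        (convex_ball _ _).isPreconnected ?_ ?_ (Metric.mem_ball_self hr0) ?_ hy
      · intro n z _
        have := ((hasDerivAt_pow (2*n+1) z).div_const (2*n+1 : ℝ)).const_mul ((Nat.choose (2*n) n : ℝ) / 4 ^ n)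
        refine HasDerivAt.congr_deriv this ?_
        have : (2*n+1:ℝ) ≠ 0 := by positivity
        push_cast
        field_simp
        try simp
      · intro n z hz
        have hz' : |z| < r := by simpa using hz
        rw [Real.norm_eq_abs, abs_mul, abs_of_nonneg (aux_coef_nonneg n), abs_pow]
        calc _ ≤ 1 * r ^ (2*n) := by
              gcongr
              exact aux_coef_le n
          _ = _ := one_mul _
      · simp
    have e2 : ∑' n : ℕ, (Nat.choose (2*n) n : ℝ) / 4 ^ n * y ^ (2*n) = 1 / √(1 - y^2) := by
      simp_rw [pow_mul y]
      refine (aux_sqrt_series (y^2) (by positivity) ?_).tsum_eq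
      rw [sq_lt_one_iff_abs_lt_one]; linarith
    rw [e2] at e1
    have := abs_lt.1 (hy'.trans hr2)
    have e3 := e1.sub (hasDerivAt_arcsin (x := y) (by linarith) (by linarith))
    rwa [sub_self] at e3
  have hc := IsOpen.is_const_of_deriv_eq_zero (f := fun z => (∑' n : ℕ, (Nat.choose (2*n) n : ℝ) / 4 ^ n * (z ^ (2*n+1) / (2*n+1))) - arcsin z)
    Metric.isOpen_ball (convex_ball (0:ℝ) r).isPreconnected
    (fun y hy => (hd y hy).differentiableAt.differentiableWithinAt) (fun y hy => (hd y hy).deriv)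
    (x := x) (y := 0) (by simpa using hr1) (by simpa using hr0)
  simp at hc
  linarith

lemma aux_summable_g : Summable (fun n : ℕ => (1:ℝ) / ((n:ℝ)+1)^2) := by
  have := (summable_nat_add_iff 1).2 (Real.summable_one_div_nat_pow.2 (one_lt_two))
  simpa using this

lemma aux_bound (n : ℕ) (z : ℝ) (hz : |z| ≤ 1) :
    ‖(Nat.choose (2*n) n : ℝ) / 4 ^ n * (z ^ (2*n+2) / ((2*n+1)*(2*n+2)))‖ ≤ 1 / ((n:ℝ)+1)^2 := by
  rw [Real.norm_eq_abs, abs_mul, abs_of_nonneg (aux_coef_nonneg n), abs_div, abs_pow,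
    abs_of_nonneg (by positivity : (0:ℝ) ≤ (2*n+1)*(2*n+2))]
  calc _ ≤ 1 * (1 / ((2*n+1)*(2*n+2) : ℝ)) := by
        gcongr
        · exact aux_coef_le n
        · exact pow_le_one₀ (abs_nonneg _) hz
    _ ≤ _ := by
      rw [one_mul]
      apply one_div_le_one_div_of_le (by positivity)
      have : (0:ℝ) ≤ n := by positivity
      nlinarith

lemma aux_g_open (x : ℝ) (hx : |x| < 1) :
    ∑' n : ℕ, (Nat.choose (2*n) n : ℝ) / 4 ^ n * (x ^ (2*n+2) / ((2*n+1)*(2*n+2))) = √(1-x^2) + x * arcsin x - 1 := by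
  obtain ⟨r, hr1, hr2⟩ := exists_between hx
  have hr0 : 0 < r := lt_of_le_of_lt (abs_nonneg _) hr1
  have hd : ∀ y ∈ Metric.ball (0:ℝ) r, HasDerivAt (fun z => (∑' n : ℕ, (Nat.choose (2*n) n : ℝ) / 4 ^ n * (z ^ (2*n+2) / ((2*n+1)*(2*n+2)))) - (√(1-z^2) + z * arcsin z)) 0 y := by
    intro y hy
    have hy' : |y| < r := by simpa using hy
    have e1 : HasDerivAt (fun z => (∑' n : ℕ, (Nat.choose (2*n) n : ℝ) / 4 ^ n * (z ^ (2*n+2) / ((2*n+1)*(2*n+2))))) (∑' n : ℕ, (Nat.choose (2*n) n : ℝ) / 4 ^ n * (y ^ (2*n+1) / (2*n+1))) y := by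
      refine hasDerivAt_tsum_of_isPreconnected (g' := fun n y => (Nat.choose (2*n) n : ℝ) / 4 ^ n * (y ^ (2*n+1) / (2*n+1))) (aux_sum0 r hr0.le hr2) Metric.isOpen_ball
        (convex_ball _ _).isPreconnected ?_ ?_ (Metric.mem_ball_self hr0) ?_ hy
      · intro n z _
        have := ((hasDerivAt_pow (2*n+2) z).div_const ((2*n+1)*(2*n+2) : ℝ)).const_mul ((Nat.choose (2*n) n : ℝ) / 4 ^ n)
        refine HasDerivAt.congr_deriv this ?_
        have : (2*n+1:ℝ) ≠ 0 := by positivity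
        have : (2*n+2:ℝ) ≠ 0 := by positivity
        push_cast
        field_simp
        try simp
      · intro n z hz
        have hz' : |z| < r := by simpa using hz
        rw [Real.norm_eq_abs, abs_mul, abs_of_nonneg (aux_coef_nonneg n), abs_div, abs_pow,
          abs_of_nonneg (by positivity : (0:ℝ) ≤ (2*n+1))]
        calc _ ≤ 1 * (r ^ (2*n) / 1) := by
              gcongr
              · exact aux_coef_le n
              · rw [pow_succ]
                calc _ ≤ r ^ (2*n) * 1 := by
                      gcongr
                      linarith
                  _ = _ := mul_one _
              · have : (0:ℝ) ≤ n := by positivity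
                linarith
          _ = _ := by simp
      · simp
    rw [aux_arcsin y (hy'.trans hr2)] at e1
    have hy2 := abs_lt.1 (hy'.trans hr2)
    have hpos : 0 < 1 - y^2 := by nlinarith
    have e2 := hasDerivAt_arcsin (x := y) (by linarith) (by linarith)
    have e3 := (((hasDerivAt_pow 2 y).const_sub 1).sqrt hpos.ne').add ((hasDerivAt_id y).mul e2)
    have e4 := e1.sub e3
    refine HasDerivAt.congr_deriv e4 ?_
    have : √(1-y^2) ≠ 0 := by positivity
    simp
    field_simp
    ring
  have hc := IsOpen.is_const_of_deriv_eq_zero (f := fun z => (∑' n : ℕ, (Nat.choose (2*n) n : ℝ) / 4 ^ n * (z ^ (2*n+2) / ((2*n+1)*(2*n+2)))) - (√(1-z^2) + z * arcsin z))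
    Metric.isOpen_ball (convex_ball (0:ℝ) r).isPreconnected
    (fun y hy => (hd y hy).differentiableAt.differentiableWithinAt) (fun y hy => (hd y hy).deriv)
    (x := x) (y := 0) (by simpa using hr1) (by simpa using hr0)
  simp at hc
  linarith

lemma aux_g (x : ℝ) (hx : |x| ≤ 1) :
    HasSum (fun n : ℕ => (Nat.choose (2*n) n : ℝ) / 4 ^ n * (x ^ (2*n+2) / ((2*n+1)*(2*n+2)))) (√(1-x^2) + x * arcsin x - 1) := by
  have hs : Summable (fun n : ℕ => (Nat.choose (2*n) n : ℝ) / 4 ^ n * (x ^ (2*n+2) / ((2*n+1)*(2*n+2)))) :=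
    Summable.of_norm_bounded aux_summable_g (fun n => aux_bound n x hx)
  have hcont : ContinuousOn (fun x : ℝ => ∑' n : ℕ, (Nat.choose (2*n) n : ℝ) / 4 ^ n * (x ^ (2*n+2) / ((2*n+1)*(2*n+2)))) (Set.Icc (-1) 1) := by
    refine continuousOn_tsum (fun n => by fun_prop) aux_summable_g (fun n z hz => aux_bound n z (abs_le.2 hz))
  have heq : Set.EqOn (fun x : ℝ => ∑' n : ℕ, (Nat.choose (2*n) n : ℝ) / 4 ^ n * (x ^ (2*n+2) / ((2*n+1)*(2*n+2)))) (fun x => √(1-x^2) + x * arcsin x - 1) (Set.Icc (-1) 1) := by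
    have hcl : Set.Icc (-1:ℝ) 1 ⊆ closure (Set.Ioo (-1) 1) := by
      rw [closure_Ioo (by norm_num)]
    refine Set.EqOn.of_subset_closure (s := Set.Ioo (-1:ℝ) 1) ?_ hcont ?_ Set.Ioo_subset_Icc_self hcl
    · intro z hz
      exact aux_g_open z (abs_lt.2 hz)
    · have := continuous_arcsin
      fun_prop
  have := heq (abs_le.1 hx)
  beta_reduce at this
  rw [← this]
  exact hs.hasSum

lemma aux_cf (d : ℕ) (w : Fin d → ℝ) :
    ∫ z, Complex.exp ((dot w z : ℝ) * Complex.I) ∂ stdGaussian d = Complex.exp (-((∑ i, w i ^ 2 : ℝ) : ℂ) / 2) := by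
  have h1 : ∀ z : Fin d → ℝ, Complex.exp ((dot w z : ℝ) * Complex.I) = ∏ i, Complex.exp (w i * z i * Complex.I) := by
    intro z
    rw [← Complex.exp_sum, dot]
    push_cast
    rw [Finset.sum_mul]
  simp_rw [h1]
  unfold stdGaussian
  rw [integral_fintype_prod_eq_prod (fun i (t : ℝ) => Complex.exp (w i * t * Complex.I))]
  have h2 : ∀ t : ℝ, ∫ z : ℝ, Complex.exp (t * z * Complex.I) ∂(ProbabilityTheory.gaussianReal 0 1) = Complex.exp (-((t:ℂ)^2) / 2) := by
    intro t
    rw [← charFun_apply_real, ProbabilityTheory.charFun_gaussianReal]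
    congr 1
    simp
    ring
  simp_rw [h2]
  rw [← Complex.exp_sum]
  congr 1
  push_cast
  rw [← Finset.sum_div, Finset.sum_neg_distrib]

lemma aux_meas {d : ℕ} (x : Fin d → ℝ) : Measurable (fun z => dot x z) := by
  unfold dot; fun_prop

instance aux_prob (d : ℕ) : IsProbabilityMeasure (stdGaussian d) := by
  unfold stdGaussian; infer_instance

lemma aux_law (d e : ℕ) (x y : Fin d → ℝ) (x' y' : Fin e → ℝ)
    (h1 : ∑ i, x i ^ 2 = ∑ i, x' i ^ 2) (h2 : ∑ i, y i ^ 2 = ∑ i, y' i ^ 2) (h3 : dot x y = dot x' y') :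
    (stdGaussian d).map (fun z => (dot x z, dot y z)) = (stdGaussian e).map (fun z => (dot x' z, dot y' z)) := by
  have := Measure.isProbabilityMeasure_map (μ := stdGaussian d) ((aux_meas x).prodMk (aux_meas y)).aemeasurable
  have := Measure.isProbabilityMeasure_map (μ := stdGaussian e) ((aux_meas x').prodMk (aux_meas y')).aemeasurable
  apply Measure.ext_of_charFunDual
  ext L
  have key : ∀ (n : ℕ) (u v : Fin n → ℝ), charFunDual ((stdGaussian n).map (fun z => (dot u z, dot v z))) L
      = Complex.exp (-((L (1,0) ^ 2 * (∑ i, u i ^ 2) + 2 * L (1,0) * L (0,1) * dot u v + L (0,1) ^ 2 * (∑ i, v i ^ 2) : ℝ) : ℂ) / 2) := by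
    intro n u v
    rw [charFunDual_apply, integral_map ((aux_meas u).prodMk (aux_meas v)).aemeasurable (by fun_prop)]
    have hL : ∀ z, L (dot u z, dot v z) = dot (fun i => L (1,0) * u i + L (0,1) * v i) z := by
      intro z
      have : (dot u z, dot v z) = dot u z • ((1:ℝ),(0:ℝ)) + dot v z • ((0:ℝ),(1:ℝ)) := by simp
      rw [this, map_add, map_smul, map_smul, smul_eq_mul, smul_eq_mul]
      simp only [dot]
      rw [Finset.sum_mul, Finset.sum_mul, ← Finset.sum_add_distrib]
      exact Finset.sum_congr rfl fun i _ => by ring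
    simp_rw [hL, aux_cf]
    congr 4
    rw [Finset.mul_sum, Finset.mul_sum, dot, Finset.mul_sum, ← Finset.sum_add_distrib, ← Finset.sum_add_distrib]
    exact Finset.sum_congr rfl fun i _ => by ring
  rw [key, key, h1, h2, h3]

lemma aux_relu_meas : Measurable relu := by
  unfold relu; fun_prop

lemma aux_ntk_congr (d e : ℕ) (x y : Fin d → ℝ) (x' y' : Fin e → ℝ)
    (h1 : ∑ i, x i ^ 2 = ∑ i, x' i ^ 2) (h2 : ∑ i, y i ^ 2 = ∑ i, y' i ^ 2) (h3 : dot x y = dot x' y') :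
    ntk d x y = ntk e x' y' := by
  have key : ∀ (n : ℕ) (u v : Fin n → ℝ), ntk n u v = ∫ p, relu p.1 * relu p.2 ∂((stdGaussian n).map (fun z => (dot u z, dot v z))) := by
    intro n u v
    rw [integral_map ((aux_meas u).prodMk (aux_meas v)).aemeasurable]
    · rfl
    · exact ((aux_relu_meas.comp measurable_fst).mul (aux_relu_meas.comp measurable_snd)).aestronglyMeasurable
  rw [key, key, aux_law d e x y x' y' h1 h2 h3]

lemma aux_relu_mul (a b : ℝ) (ha : 0 ≤ a) : relu (a * b) = a * relu b := by
  unfold relu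
  rw [mul_max_of_nonneg _ _ ha, mul_zero]

lemma aux_radial : ∫ r in Set.Ioi (0:ℝ), r ^ 3 * exp (-(r^2)/2) = 2 := by
  have h := integral_rpow_mul_exp_neg_mul_rpow (p := 2) (q := 3) (b := 1/2) (by norm_num) (by norm_num) (by norm_num)
  have e : ∫ r in Set.Ioi (0:ℝ), r ^ 3 * exp (-(r^2)/2) = ∫ r in Set.Ioi (0:ℝ), r ^ (3:ℝ) * exp (-(1/2) * r^(2:ℝ)) := by
    refine setIntegral_congr_fun measurableSet_Ioi fun r _ => ?_
    rw [show (3:ℝ) = ((3:ℕ):ℝ) by norm_num, show (2:ℝ) = ((2:ℕ):ℝ) by norm_num, Real.rpow_natCast, Real.rpow_natCast]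
    congr 2
    push_cast
    ring
  rw [e, h]
  have h1 : (-(3 + 1) / 2 : ℝ) = ((-2 : ℤ) : ℝ) := by norm_num
  have h2 : ((3 + 1) / 2 : ℝ) = 1 + 1 := by norm_num
  rw [h1, h2, Real.rpow_intCast, Real.Gamma_add_one one_ne_zero, Real.Gamma_one]
  norm_num

lemma aux_angular (φ : ℝ) (h0 : 0 ≤ φ) (h1 : φ ≤ π) :
    ∫ θ in Set.Ioo (-π) π, relu (cos θ) * relu (cos (θ - φ)) = (sin φ + (π - φ) * cos φ) / 2 := by
  have hpi := Real.pi_pos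
  have e1 : ∫ θ in Set.Ioo (-π) π, relu (cos θ) * relu (cos (θ - φ))
      = ∫ θ in Set.Ioo (-π) π, (Set.Ioc (φ - π/2) (π/2)).indicator (fun θ => cos θ * cos (θ - φ)) θ := by
    refine setIntegral_congr_fun measurableSet_Ioo fun θ hθ => ?_
    simp only [Set.mem_Ioo] at hθ
    by_cases hm : θ ∈ Set.Ioc (φ - π/2) (π/2)
    · rw [Set.indicator_of_mem hm]
      simp only [Set.mem_Ioc] at hm
      have a1 : 0 ≤ cos θ := cos_nonneg_of_mem_Icc ⟨by linarith, by linarith⟩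
      have a2 : 0 ≤ cos (θ - φ) := cos_nonneg_of_mem_Icc ⟨by linarith, by linarith⟩
      simp [relu, a1, a2]
    · rw [Set.indicator_of_notMem hm]
      simp only [Set.mem_Ioc, not_and_or, not_lt, not_le] at hm
      have z1 : ∀ t : ℝ, t ≤ 0 → relu t = 0 := fun t ht => by simp [relu, ht]
      rcases hm with hm | hm
      · by_cases hb : θ < -(π/2)
        · have : cos θ ≤ 0 := by
            rw [← cos_neg]
            exact cos_nonpos_of_pi_div_two_le_of_le (by linarith) (by linarith)
          simp [z1 _ this]
        · have : cos (θ - φ) ≤ 0 := by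
            rw [← cos_neg]
            exact cos_nonpos_of_pi_div_two_le_of_le (by linarith) (by linarith)
          simp [z1 _ this]
      · have : cos θ ≤ 0 := cos_nonpos_of_pi_div_two_le_of_le (by linarith) (by linarith)
        simp [z1 _ this]
  rw [e1, setIntegral_indicator measurableSet_Ioc]
  have e2 : Set.Ioo (-π) π ∩ Set.Ioc (φ - π/2) (π/2) = Set.Ioc (φ - π/2) (π/2) := by
    apply Set.inter_eq_right.2
    intro θ hθ
    simp only [Set.mem_Ioc, Set.mem_Ioo] at hθ ⊢
    constructor <;> linarith
  rw [e2, ← intervalIntegral.integral_of_le (by linarith)]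
  have hder : ∀ θ ∈ Set.uIcc (φ - π/2) (π/2), HasDerivAt (fun θ => sin (2*θ - φ) / 4 + θ * (cos φ / 2)) (cos θ * cos (θ - φ)) θ := by
    intro θ _
    have a1 : HasDerivAt (fun θ : ℝ => 2*θ - φ) 2 θ := by
      simpa using ((hasDerivAt_id θ).const_mul 2).sub_const φ
    have := (a1.sin.div_const 4).add ((hasDerivAt_id θ).mul_const (cos φ / 2))
    refine HasDerivAt.congr_deriv this ?_
    have b1 : cos (2*θ - φ) = cos θ * cos (θ - φ) - sin θ * sin (θ - φ) := by
      rw [← cos_add]; congr 1; ring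
    have b2 : cos φ = cos θ * cos (θ - φ) + sin θ * sin (θ - φ) := by
      rw [← cos_sub]; congr 1; ring
    linear_combination (1/2) * b1 + (1/2) * b2
  rw [intervalIntegral.integral_eq_sub_of_hasDerivAt hder (Continuous.intervalIntegrable (by fun_prop) _ _)]
  have c1 : sin (2 * (π/2) - φ) = sin φ := by rw [← sin_pi_sub]; congr 1; ring
  have c2 : sin (2 * (φ - π/2) - φ) = - sin φ := by
    rw [← sin_sub_pi]; congr 1; ring
  rw [c1, c2]
  ring

lemma aux_ntk2 (X Y φ : ℝ) (hX : 0 ≤ X) (hY : 0 ≤ Y) (h0 : 0 ≤ φ) (h1 : φ ≤ π) :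
    ntk 2 ![X, 0] ![Y * cos φ, Y * sin φ] = X * Y / (2*π) * (sin φ + (π - φ) * cos φ) := by
  have hpi := Real.pi_pos
  unfold ntk stdGaussian
  have hmp := measurePreserving_finTwoArrow (ProbabilityTheory.gaussianReal 0 1)
  have s1 : ∫ z : Fin 2 → ℝ, relu (dot ![X, 0] z) * relu (dot ![Y * cos φ, Y * sin φ] z) ∂(Measure.pi fun _ => ProbabilityTheory.gaussianReal 0 1)
      = ∫ p : ℝ × ℝ, relu (X * p.1) * relu (Y * (cos φ * p.1 + sin φ * p.2)) ∂((ProbabilityTheory.gaussianReal 0 1).prod (ProbabilityTheory.gaussianReal 0 1)) := by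
    rw [← hmp.integral_comp' (fun p : ℝ × ℝ => relu (X * p.1) * relu (Y * (cos φ * p.1 + sin φ * p.2)))]
    refine integral_congr_ae (Filter.Eventually.of_forall fun z => ?_)
    simp [dot, Fin.sum_univ_two, MeasurableEquiv.finTwoArrow, mul_add, mul_assoc]
  rw [s1, ProbabilityTheory.gaussianReal_of_var_ne_zero _ one_ne_zero,
    prod_withDensity (ProbabilityTheory.measurable_gaussianPDF _ _) (ProbabilityTheory.measurable_gaussianPDF _ _),
    integral_withDensity_eq_integral_toReal_smul
      (f := fun z : ℝ × ℝ => ProbabilityTheory.gaussianPDF 0 1 z.1 * ProbabilityTheory.gaussianPDF 0 1 z.2)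
      (((ProbabilityTheory.measurable_gaussianPDF _ _).comp measurable_fst).mul ((ProbabilityTheory.measurable_gaussianPDF _ _).comp measurable_snd))
      (Filter.Eventually.of_forall fun p => ENNReal.mul_lt_top ProbabilityTheory.gaussianPDF_lt_top ProbabilityTheory.gaussianPDF_lt_top),
    ← Measure.volume_eq_prod, ← integral_comp_polarCoord_symm, polarCoord_target]
  have s2 : ∫ p in Set.Ioi (0:ℝ) ×ˢ Set.Ioo (-π) π, p.1 • ((ProbabilityTheory.gaussianPDF 0 1 (polarCoord.symm p).1 * ProbabilityTheory.gaussianPDF 0 1 (polarCoord.symm p).2).toReal •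
        (relu (X * (polarCoord.symm p).1) * relu (Y * (cos φ * (polarCoord.symm p).1 + sin φ * (polarCoord.symm p).2))))
      = ∫ p in Set.Ioi (0:ℝ) ×ˢ Set.Ioo (-π) π, (X * Y / (2 * π) * (p.1^3 * exp (-(p.1^2)/2))) * (relu (cos p.2) * relu (cos (p.2 - φ))) := by
    refine setIntegral_congr_fun (measurableSet_Ioi.prod measurableSet_Ioo) fun p hp => ?_
    have hr : 0 < p.1 := hp.1
    simp only [polarCoord_symm_apply, ENNReal.toReal_mul, ProbabilityTheory.toReal_gaussianPDF, smul_eq_mul]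
    have r1 : X * (p.1 * cos p.2) = (X * p.1) * cos p.2 := by ring
    have r2 : Y * (cos φ * (p.1 * cos p.2) + sin φ * (p.1 * sin p.2)) = (Y * p.1) * cos (p.2 - φ) := by
      rw [cos_sub]; ring
    rw [r1, r2, aux_relu_mul _ _ (by positivity), aux_relu_mul _ _ (by positivity)]
    have r3 : ProbabilityTheory.gaussianPDFReal 0 1 (p.1 * cos p.2) * ProbabilityTheory.gaussianPDFReal 0 1 (p.1 * sin p.2) = 1 / (2*π) * exp (-(p.1^2)/2) := by
      unfold ProbabilityTheory.gaussianPDFReal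
      have q1 : √(2 * π * ((1 : NNReal) : ℝ))⁻¹ * √(2 * π * ((1 : NNReal) : ℝ))⁻¹ = 1 / (2*π) := by
        rw [Real.mul_self_sqrt (by positivity)]; simp
      have q2 : exp (-(p.1^2)/2) = exp (-(p.1 * cos p.2 - 0)^2 / (2 * ((1 : NNReal) : ℝ))) * exp (-(p.1 * sin p.2 - 0)^2 / (2 * ((1 : NNReal) : ℝ))) := by
        rw [← exp_add]
        congr 1
        simp
        linear_combination (p.1^2/2) * (sin_sq_add_cos_sq p.2)
      rw [q2, ← q1, Real.sqrt_inv]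
      ring
    rw [r3]
    ring
  rw [s2, Measure.volume_eq_prod, setIntegral_prod_mul (fun r : ℝ => X * Y / (2 * π) * (r^3 * exp (-(r^2)/2))) (fun θ : ℝ => relu (cos θ) * relu (cos (θ - φ))), integral_const_mul, aux_radial, aux_angular φ h0 h1]
  ring

lemma aux_vnorm_sq {d : ℕ} (x : Fin d → ℝ) : vnorm x ^ 2 = ∑ i, x i ^ 2 := by
  rw [vnorm, Real.sq_sqrt (Finset.sum_nonneg fun i _ => sq_nonneg _)]

lemma aux_vnorm_pos {d : ℕ} (x : Fin d → ℝ) (hx : x ≠ 0) : 0 < vnorm x := by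
  apply Real.sqrt_pos.2
  obtain ⟨i, hi⟩ := Function.ne_iff.1 hx
  exact Finset.sum_pos' (fun i _ => sq_nonneg _) ⟨i, Finset.mem_univ _, by simp at hi; positivity⟩

lemma aux_dot_le {d : ℕ} (x y : Fin d → ℝ) : |dot x y| ≤ vnorm x * vnorm y := by
  apply abs_le_of_sq_le_sq
  · rw [mul_pow, aux_vnorm_sq, aux_vnorm_sq]
    exact Finset.sum_mul_sq_le_sq_mul_sq _ _ _
  · unfold vnorm; positivity

lemma aux_gam (d : ℕ) (a b : Fin (d+1) → ℝ) (c : ℝ) (ha : ∑ i, a i = 0) (hb : ∑ i, b i = 0)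
    (hc : 2 * c + d * c^2 = 1) :
    ∑ i : Fin d, (a i.castSucc - c * a (Fin.last d)) * (b i.castSucc - c * b (Fin.last d)) = ∑ i, a i * b i := by
  rw [Fin.sum_univ_castSucc] at ha hb ⊢
  simp only [sub_mul, mul_sub, Finset.sum_sub_distrib, Finset.sum_const, Finset.card_univ, Fintype.card_fin, nsmul_eq_mul]
  have e1 : ∑ i : Fin d, a i.castSucc * (c * b (Fin.last d)) = (∑ i : Fin d, a i.castSucc) * (c * b (Fin.last d)) := by rw [Finset.sum_mul]
  have e2 : ∑ i : Fin d, c * a (Fin.last d) * b i.castSucc = c * a (Fin.last d) * (∑ i : Fin d, b i.castSucc) := by rw [Finset.mul_sum]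
  rw [e1, e2]
  linear_combination (a (Fin.last d) * b (Fin.last d)) * hc - c * b (Fin.last d) * ha - c * a (Fin.last d) * hb

lemma aux_filter (d : ℕ) (f : Fin (d+1) → ℝ) :
    ∑ γ ∈ Finset.univ.filter (fun γ : Fin (d+1) => (γ : ℕ) < d + 1 - 1), f γ = ∑ i : Fin d, f i.castSucc := by
  rw [Finset.sum_filter, Fin.sum_univ_castSucc]
  simp

lemma aux_ab (d : ℕ) (u : Fin d → ℝ) :
    ∑ α, ∑ β, (if α < β then u α * u β else 0) = ((∑ i, u i)^2 - ∑ i, u i ^ 2) / 2 := by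
  have h : (∑ i, u i)^2 = ∑ α, ∑ β, (if α < β then u α * u β else 0) + ∑ α, ∑ β, (if α < β then u α * u β else 0) + ∑ i, u i ^ 2 := by
    nth_rewrite 2 [Finset.sum_comm]
    rw [← Finset.sum_add_distrib, ← Finset.sum_add_distrib, sq, Finset.sum_mul]
    refine Finset.sum_congr rfl fun i _ => ?_
    rw [← Finset.sum_add_distrib, Finset.mul_sum]
    have : u i ^ 2 = ∑ j, if i = j then u i ^ 2 else 0 := by simp
    rw [this, ← Finset.sum_add_distrib]
    refine Finset.sum_congr rfl fun j _ => ?_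
    rcases lt_trichotomy i j with h | h | h
    · simp [h, h.ne, h.not_gt]
    · subst h; simp [sq]
    · simp [h, h.ne', h.not_gt, mul_comm]
  linarith

lemma aux_alg (d : ℕ) (hd : 0 < d) (x y : Fin d → ℝ) (hx : x ≠ 0) (hy : y ≠ 0) :
    ((2 * d + 1) / (4 * π)) * F0 d x * F0 d y
        + (1 / 4) * ∑ l, Fl d l x * Fl d l y
        + (1 / (2 * π * (d + 2))) *
            ((∑ γ ∈ Finset.univ.filter fun γ : Fin d => (γ : ℕ) < d - 1,
                Fgam d hd γ x * Fgam d hd γ y)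
              + ∑ α, ∑ β, if α < β then Fab d α β x * Fab d α β y else 0)
    = vnorm x * vnorm y / (2*π) + dot x y / 4 + dot x y ^ 2 / (vnorm x * vnorm y) / (4*π) := by
  have hX := aux_vnorm_pos x hx
  have hY := aux_vnorm_pos y hy
  have hX2 := aux_vnorm_sq x
  have hY2 := aux_vnorm_sq y
  obtain ⟨d, rfl⟩ : ∃ e, d = e + 1 := ⟨d - 1, by omega⟩
  have hd2 : (0:ℝ) < ((d+1:ℕ):ℝ) + 2 := by positivity
  have hD : (0:ℝ) < ((d+1:ℕ):ℝ) := by positivity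
  have hs : √(((d+1:ℕ):ℝ) + 2) * √(((d+1:ℕ):ℝ) + 2) = ((d+1:ℕ):ℝ) + 2 := Real.mul_self_sqrt hd2.le
  have hsd : √(((d+1:ℕ):ℝ)) * √(((d+1:ℕ):ℝ)) = ((d+1:ℕ):ℝ) := Real.mul_self_sqrt hD.le
  have hsdpos : 0 < √(((d+1:ℕ):ℝ)) := Real.sqrt_pos.2 hD
  have hs2 : √(2:ℝ) * √2 = 2 := Real.mul_self_sqrt (by norm_num)
  -- first sum
  have g1 : ∑ γ ∈ Finset.univ.filter (fun γ : Fin (d+1) => (γ : ℕ) < d + 1 - 1),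
                Fgam (d+1) (by omega) γ x * Fgam (d+1) (by omega) γ y
      = (((d+1:ℕ):ℝ) + 2) / 2 * ((∑ i, (x i * y i)^2) / (vnorm x * vnorm y) - vnorm x * vnorm y / ((d+1:ℕ):ℝ)) := by
    rw [aux_filter d (fun γ => Fgam (d+1) (by omega) γ x * Fgam (d+1) (by omega) γ y)]
    have hsum : ∀ z : Fin (d+1) → ℝ, 0 < vnorm z → ∑ i, (z i ^ 2 / vnorm z - vnorm z / ((d+1:ℕ):ℝ)) = 0 := by
      intro z hz
      rw [Finset.sum_sub_distrib, ← Finset.sum_div, ← aux_vnorm_sq]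
      simp only [Finset.sum_const, Finset.card_univ, Fintype.card_fin, nsmul_eq_mul]
      field_simp
      ring
    have hc : 2 * (1 / (√((d+1:ℕ):ℝ) + 1)) + d * (1 / (√((d+1:ℕ):ℝ) + 1))^2 = 1 := by
      have : √((d+1:ℕ):ℝ) + 1 ≠ 0 := by positivity
      field_simp
      push_cast at hsd ⊢
      linear_combination - hsd
    have h1 := aux_gam d _ _ _ (hsum x hX) (hsum y hY) hc
    have h2 : ∑ i, (x i ^ 2 / vnorm x - vnorm x / ((d+1:ℕ):ℝ)) * (y i ^ 2 / vnorm y - vnorm y / ((d+1:ℕ):ℝ))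
        = (∑ i, (x i * y i)^2) / (vnorm x * vnorm y) - vnorm x * vnorm y / ((d+1:ℕ):ℝ) := by
      have : ∀ i, (x i ^ 2 / vnorm x - vnorm x / ((d+1:ℕ):ℝ)) * (y i ^ 2 / vnorm y - vnorm y / ((d+1:ℕ):ℝ))
         = (x i * y i)^2 / (vnorm x * vnorm y) - vnorm x / ((d+1:ℕ):ℝ) * (y i ^ 2 / vnorm y - vnorm y / ((d+1:ℕ):ℝ)) - (x i ^ 2 * (vnorm y / vnorm x / ((d+1:ℕ):ℝ))) := by
        intro i
        field_simp
        ring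
      simp_rw [this]
      rw [Finset.sum_sub_distrib, Finset.sum_sub_distrib, ← Finset.mul_sum, hsum y hY, ← Finset.sum_mul, ← hX2, Finset.sum_div]
      field_simp
      ring
    rw [← h2, ← h1, Finset.mul_sum]
    refine Finset.sum_congr rfl fun i _ => ?_
    have hK : √(((d+1:ℕ):ℝ) + 2) / √2 * (√(((d+1:ℕ):ℝ) + 2) / √2) = (((d+1:ℕ):ℝ) + 2) / 2 := by
      rw [div_mul_div_comm, hs, hs2]
    rw [← hK]
    unfold Fgam
    have : (⟨d + 1 - 1, by omega⟩ : Fin (d+1)) = Fin.last d := rfl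
    simp only [this]
    ring
  have g2 : ∑ α, ∑ β, (if α < β then Fab (d+1) α β x * Fab (d+1) α β y else 0)
      = (((d+1:ℕ):ℝ) + 2) / (vnorm x * vnorm y) * ((dot x y ^ 2 - ∑ i, (x i * y i)^2) / 2) := by
    have := aux_ab (d+1) (fun i => x i * y i)
    unfold dot
    rw [← this, Finset.mul_sum]
    refine Finset.sum_congr rfl fun i _ => ?_
    rw [Finset.mul_sum]
    refine Finset.sum_congr rfl fun j _ => ?_
    split_ifs
    · unfold Fab
      rw [div_mul_div_comm, div_mul_eq_mul_div]
      congr 1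
      linear_combination (x i * x j * y i * y j) * hs
    · simp
  have g3 : F0 (d+1) x * F0 (d+1) y = vnorm x * vnorm y / ((d+1:ℕ):ℝ) := by
    unfold F0
    rw [div_mul_div_comm, hsd]
  have g4 : ∑ l, Fl (d+1) l x * Fl (d+1) l y = dot x y := rfl
  rw [g1, g2, g4, mul_assoc, g3]
  have := Real.pi_pos
  field_simp
  ring

lemma aux_term {d : ℕ} (x y : Fin d → ℝ) (hx : x ≠ 0) (hy : y ≠ 0) (n : ℕ) :
    ntkTerm x y n = vnorm x * vnorm y * ((Nat.choose (2*n) n : ℝ) / 4 ^ n *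
      ((dot x y / (vnorm x * vnorm y)) ^ (2*n+2) / ((2*n+1)*(2*n+2)))) := by
  have hX := aux_vnorm_pos x hx
  have hY := aux_vnorm_pos y hy
  have hP : 0 < vnorm x * vnorm y := mul_pos hX hY
  unfold ntkTerm
  generalize vnorm x * vnorm y = P at *
  rw [pow_mul, div_pow, show (2:ℝ)^2 = 4 by norm_num, pow_succ P (2*n+1)]
  field_simp

theorem ntk_spectral_expansion (d : ℕ) (hd : 2 ≤ d) (x y : Fin d → ℝ)
    (hx : x ≠ 0) (hy : y ≠ 0) :
    Summable (fun n : ℕ => |ntkTerm x y (n + 1)|) ∧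
    ntk d x y =
      ((2 * d + 1) / (4 * π)) * F0 d x * F0 d y
        + (1 / 4) * ∑ l, Fl d l x * Fl d l y
        + (1 / (2 * π * (d + 2))) *
            ((∑ γ ∈ Finset.univ.filter fun γ : Fin d => (γ : ℕ) < d - 1,
                Fgam d (by omega) γ x * Fgam d (by omega) γ y)
              + ∑ α, ∑ β, if α < β then Fab d α β x * Fab d α β y else 0)
        + rker x y := by
  have hX := aux_vnorm_pos x hx
  have hY := aux_vnorm_pos y hy
  have hP : 0 < vnorm x * vnorm y := mul_pos hX hY
  have hpi := Real.pi_pos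
  have hρ : |dot x y / (vnorm x * vnorm y)| ≤ 1 := by
    rw [abs_div, abs_of_pos hP, div_le_one hP]
    exact aux_dot_le x y
  have hS : HasSum (fun n => ntkTerm x y n) (vnorm x * vnorm y *
      (√(1 - (dot x y / (vnorm x * vnorm y)) ^ 2) +
        (dot x y / (vnorm x * vnorm y)) * arcsin (dot x y / (vnorm x * vnorm y)) - 1)) := by
    simp_rw [aux_term x y hx hy]
    exact (aux_g _ hρ).mul_left _
  have hS1 := (summable_nat_add_iff 1).2 hS.summable
  refine ⟨hS1.abs, ?_⟩
  rw [aux_alg d (lt_of_lt_of_le two_pos hd) x y hx hy]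
  have hT := hS.summable.tsum_eq_zero_add
  rw [hS.tsum_eq] at hT
  have h0 : ntkTerm x y 0 = dot x y ^ 2 / (vnorm x * vnorm y) / 2 := by
    unfold ntkTerm
    simp
    field_simp
  rw [h0] at hT
  have hk : ntk d x y = vnorm x * vnorm y / (2*π) *
      (√(1 - (dot x y / (vnorm x * vnorm y)) ^ 2) +
        (π - arccos (dot x y / (vnorm x * vnorm y))) * (dot x y / (vnorm x * vnorm y))) := by
    have hcos := Real.cos_arccos (abs_le.1 hρ).1 (abs_le.1 hρ).2
    have h := aux_ntk2 (vnorm x) (vnorm y) (arccos (dot x y / (vnorm x * vnorm y))) hX.le hY.le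
      (arccos_nonneg _) (arccos_le_pi _)
    rw [aux_ntk_congr d 2 x y ![vnorm x, 0] ![vnorm y * cos (arccos (dot x y / (vnorm x * vnorm y))),
      vnorm y * sin (arccos (dot x y / (vnorm x * vnorm y)))], h, hcos, sin_arccos]
    · simp [Fin.sum_univ_two, aux_vnorm_sq]
    · simp only [Fin.sum_univ_two, Matrix.cons_val_zero, Matrix.cons_val_one]
      rw [← aux_vnorm_sq]
      linear_combination (-(vnorm y)^2) * sin_sq_add_cos_sq (arccos (dot x y / (vnorm x * vnorm y)))
    · rw [hcos]
      simp only [dot, Fin.sum_univ_two, Matrix.cons_val_zero, Matrix.cons_val_one]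
      field_simp
      simp
  rw [hk, rker, arccos]
  have hT2 : ∑' n : ℕ, ntkTerm x y (n + 1) = vnorm x * vnorm y *
      (√(1 - (dot x y / (vnorm x * vnorm y)) ^ 2) +
        (dot x y / (vnorm x * vnorm y)) * arcsin (dot x y / (vnorm x * vnorm y)) - 1) -
        dot x y ^ 2 / (vnorm x * vnorm y) / 2 := by linarith
  rw [hT2]
  generalize √(1 - (dot x y / (vnorm x * vnorm y)) ^ 2) = s
  generalize arcsin (dot x y / (vnorm x * vnorm y)) = t
  generalize vnorm x * vnorm y = P at *
  field_simp
  ring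
end

section
/- Let d ≥ 2 and let γ_d be the standard Gaussian measure on ℝ^d, with inner product ⟨f,g⟩ = ∫ f(x)g(x) dγ_d(x). Define F_0(x) = |x|/√d, F_l(x) = x_l for 1 ≤ l ≤ d, F_γ(x) = (√(d+2)/√2)·( x_γ²/|x| − |x|/d − (1/(√d+1))(x_d²/|x| − |x|/d) ) for 1 ≤ γ ≤ d−1, and F_{αβ}(x) = √(d+2)·x_α x_β/|x| for 1 ≤ α < β ≤ d. Then the family consisting of F_0, all F_l, all F_γ, and all F_{αβ} is an orthonormal system in L²(γ_d): each function has ⟨F,F⟩ = 1 and any two distinct functions in the family have ⟨F,G⟩ = 0. -/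
open MeasureTheory Real

/-- Index set for the family: `F_0`, the `F_l` (`1 ≤ l ≤ d`), the `F_γ` (`1 ≤ γ ≤ d-1`),
and the `F_{αβ}` (`α < β`). -/
abbrev FamIdx (d : ℕ) : Type :=
  Unit ⊕ Fin d ⊕ Fin (d - 1) ⊕ { p : Fin d × Fin d // p.1 < p.2 }

/-- The whole family of functions. -/
noncomputable def Fam (d : ℕ) (hd : 2 ≤ d) : FamIdx d → (Fin d → ℝ) → ℝ
  | Sum.inl _ => F0 d
  | Sum.inr (Sum.inl l) => Fl d l
  | Sum.inr (Sum.inr (Sum.inl γ)) => Fgam d (by omega) (Fin.castLE (Nat.sub_le d 1) γ)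
  | Sum.inr (Sum.inr (Sum.inr p)) => Fab d p.1.1 p.1.2


namespace FamAux

lemma vnorm_sq {d : ℕ} (x : Fin d → ℝ) : vnorm x ^ 2 = ∑ i, x i ^ 2 :=
  Real.sq_sqrt (Finset.sum_nonneg fun i _ => sq_nonneg _)

lemma vnorm_nonneg {d : ℕ} (x : Fin d → ℝ) : 0 ≤ vnorm x := Real.sqrt_nonneg _

lemma abs_le_vnorm {d : ℕ} (x : Fin d → ℝ) (i : Fin d) : |x i| ≤ vnorm x := by
  apply Real.abs_le_sqrt
  exact Finset.single_le_sum (f := fun i => x i ^ 2) (fun _ _ => sq_nonneg _) (Finset.mem_univ i)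

lemma measurable_vnorm {d : ℕ} : Measurable (vnorm : (Fin d → ℝ) → ℝ) := by
  unfold vnorm; fun_prop

/-- The basic even functions. -/
noncomputable def e {d : ℕ} (a b : Fin d) (x : Fin d → ℝ) : ℝ := x a * x b / vnorm x

lemma measurable_e {d : ℕ} (a b : Fin d) : Measurable (e a b) := by
  have := measurable_vnorm (d := d)
  unfold e; fun_prop

lemma abs_e_le {d : ℕ} (a b : Fin d) (x : Fin d → ℝ) : |e a b x| ≤ vnorm x := by
  unfold e
  rw [abs_div, abs_mul, abs_of_nonneg (vnorm_nonneg x)]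
  apply div_le_of_le_mul₀ (vnorm_nonneg x) (vnorm_nonneg x)
  exact mul_le_mul (abs_le_vnorm x a) (abs_le_vnorm x b) (abs_nonneg _) (vnorm_nonneg x)

instance {d : ℕ} : IsProbabilityMeasure (stdGaussian d) := by
  unfold stdGaussian; infer_instance

lemma integrable_sq {d : ℕ} (i : Fin d) : Integrable (fun x => x i ^ 2) (stdGaussian d) := by
  have h := (ProbabilityTheory.memLp_id_gaussianReal (μ := 0) (v := 1) 2).integrable_sq
  exact integrable_comp_eval (μ := fun _ : Fin d => ProbabilityTheory.gaussianReal 0 1)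
    (i := i) (f := fun t : ℝ => t ^ 2) h

lemma integral_sq {d : ℕ} (i : Fin d) : ∫ x, x i ^ 2 ∂(stdGaussian d) = 1 := by
  have h := ProbabilityTheory.variance_id_gaussianReal (μ := 0) (v := 1)
  rw [ProbabilityTheory.variance_of_integral_eq_zero (by fun_prop) (by simp)] at h
  have := integral_comp_eval (μ := fun _ : Fin d => ProbabilityTheory.gaussianReal 0 1)
    (i := i) (f := fun t : ℝ => t ^ 2) (by fun_prop)
  unfold stdGaussian
  rw [this]
  simpa using h

lemma memLp_vnorm {d : ℕ} : MemLp (vnorm : (Fin d → ℝ) → ℝ) 2 (stdGaussian d) := by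
  rw [memLp_two_iff_integrable_sq measurable_vnorm.aestronglyMeasurable]
  simp_rw [vnorm_sq]
  exact integrable_finsetSum _ fun i _ => integrable_sq i

lemma memLp_e {d : ℕ} (a b : Fin d) : MemLp (e a b) 2 (stdGaussian d) := by
  refine memLp_vnorm.mono (measurable_e a b).aestronglyMeasurable (Filter.Eventually.of_forall ?_)
  intro x
  rw [Real.norm_eq_abs, Real.norm_eq_abs, abs_of_nonneg (vnorm_nonneg x)]
  exact abs_e_le a b x

lemma int_ee {d : ℕ} (a b c f : Fin d) :
    Integrable (fun x => e a b x * e c f x) (stdGaussian d) :=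
  (memLp_e a b).integrable_mul (memLp_e c f)

lemma int_ne {d : ℕ} (c f : Fin d) :
    Integrable (fun x => vnorm x * e c f x) (stdGaussian d) :=
  memLp_vnorm.integrable_mul (memLp_e c f)

lemma int_nn {d : ℕ} :
    Integrable (fun x : Fin d → ℝ => vnorm x * vnorm x) (stdGaussian d) :=
  memLp_vnorm.integrable_mul memLp_vnorm

/-- Invariance of the Gaussian measure under linear isometries. -/
lemma integral_comp {d : ℕ} (T : (Fin d → ℝ) →ₗ[ℝ] (Fin d → ℝ))
    (hT : ∀ x, ∑ i, T x i ^ 2 = ∑ i, x i ^ 2) (g : (Fin d → ℝ) → ℝ) (hg : Measurable g) :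
    ∫ x, g (T x) ∂(stdGaussian d) = ∫ x, g x ∂(stdGaussian d) := by
  let L : EuclideanSpace ℝ (Fin d) →ₗᵢ[ℝ] EuclideanSpace ℝ (Fin d) :=
    { toLinearMap := (WithLp.linearEquiv 2 ℝ (Fin d → ℝ)).symm.toLinearMap ∘ₗ T ∘ₗ
        (WithLp.linearEquiv 2 ℝ (Fin d → ℝ)).toLinearMap
      norm_map' := by
        intro x
        rw [EuclideanSpace.norm_eq, EuclideanSpace.norm_eq]
        congr 1
        simpa using hT (WithLp.ofLp x) }
  let E := L.toLinearIsometryEquiv rfl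
  have h1 := ProbabilityTheory.stdGaussian_map E
  have h2 : (stdGaussian d).map (WithLp.toLp 2)
      = ProbabilityTheory.stdGaussian (EuclideanSpace ℝ (Fin d)) :=
    ProbabilityTheory.map_pi_eq_stdGaussian
  have hm : Measurable fun y : EuclideanSpace ℝ (Fin d) => g (WithLp.ofLp y) :=
    hg.comp (by fun_prop)
  have hm2 : Measurable fun y : EuclideanSpace ℝ (Fin d) => g (WithLp.ofLp (E y)) :=
    hm.comp E.continuous.measurable
  have k1 : ∫ x, g x ∂(stdGaussian d) =
      ∫ y, g (WithLp.ofLp y) ∂(ProbabilityTheory.stdGaussian (EuclideanSpace ℝ (Fin d))) := by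
    rw [← h2, integral_map (by fun_prop) hm.aestronglyMeasurable]
  rw [k1, ← h1, integral_map (by fun_prop) hm.aestronglyMeasurable, ← h2,
    integral_map (by fun_prop) hm2.aestronglyMeasurable]
  rfl

lemma vnorm_congr {d : ℕ} {x y : Fin d → ℝ} (h : ∑ i, x i ^ 2 = ∑ i, y i ^ 2) :
    vnorm x = vnorm y := by unfold vnorm; rw [h]

/-- Sign flip of one coordinate. -/
def flip {d : ℕ} (k : Fin d) : (Fin d → ℝ) →ₗ[ℝ] (Fin d → ℝ) where
  toFun x i := if i = k then - x i else x i
  map_add' x y := by ext i; simp only [Pi.add_apply]; split_ifs <;> ring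
  map_smul' c x := by ext i; simp

lemma flip_apply {d : ℕ} (k : Fin d) (x : Fin d → ℝ) (i : Fin d) :
    flip k x i = if i = k then - x i else x i := rfl

lemma flip_sq {d : ℕ} (k : Fin d) (x : Fin d → ℝ) : ∑ i, flip k x i ^ 2 = ∑ i, x i ^ 2 := by
  refine Finset.sum_congr rfl fun i _ => ?_
  rw [flip_apply]; split_ifs <;> ring

lemma integral_zero_of_odd {d : ℕ} (T : (Fin d → ℝ) →ₗ[ℝ] (Fin d → ℝ))
    (hT : ∀ x, ∑ i, T x i ^ 2 = ∑ i, x i ^ 2) (g : (Fin d → ℝ) → ℝ) (hg : Measurable g)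
    (h : ∀ x, g (T x) = - g x) : ∫ x, g x ∂(stdGaussian d) = 0 := by
  have := integral_comp T hT g hg
  simp_rw [h, integral_neg] at this
  linarith

/-- The 45 degree reflection in the plane of two coordinates. -/
noncomputable def rot {d : ℕ} (i j : Fin d) : (Fin d → ℝ) →ₗ[ℝ] (Fin d → ℝ) where
  toFun x k := if k = i then (x i + x j) / √2 else if k = j then (x i - x j) / √2 else x k
  map_add' x y := by ext k; simp only [Pi.add_apply]; split_ifs <;> ring
  map_smul' c x := by
    ext k; simp only [Pi.smul_apply, smul_eq_mul, RingHom.id_apply]; split_ifs <;> ring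

lemma rot_apply {d : ℕ} (i j : Fin d) (x : Fin d → ℝ) (k : Fin d) :
    rot i j x k = if k = i then (x i + x j) / √2 else if k = j then (x i - x j) / √2 else x k := rfl

lemma rot_sq {d : ℕ} (i j : Fin d) (hij : i ≠ j) (x : Fin d → ℝ) :
    ∑ k, rot i j x k ^ 2 = ∑ k, x k ^ 2 := by
  rw [← sub_eq_zero, ← Finset.sum_sub_distrib, Fintype.sum_eq_add i j hij]
  · simp only [rot_apply, if_true, hij.symm, if_false, div_pow]
    rw [Real.sq_sqrt (by norm_num)]; ring
  · rintro k ⟨h1, h2⟩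
    simp [rot_apply, h1, h2]

lemma ee_rot {d : ℕ} (i j : Fin d) (hij : i ≠ j) (x : Fin d → ℝ) :
    e i j (rot i j x) * e i j (rot i j x) =
      1 / 4 * (e i i x * e i i x) + 1 / 4 * (e j j x * e j j x) - 1 / 2 * (e i j x * e i j x) := by
  have hs : (√2) ^ 2 = (2 : ℝ) := Real.sq_sqrt (by norm_num)
  unfold e
  rw [vnorm_congr (rot_sq i j hij x)]
  simp only [rot_apply, if_true, hij.symm, if_false]
  have : (x i + x j) / √2 * ((x i - x j) / √2) = (x i + x j) * (x i - x j) / 2 := by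
    rw [div_mul_div_comm, ← pow_two, hs]
  rw [this]; ring

lemma six {d : ℕ} (i j : Fin d) (hij : i ≠ j) :
    ∫ x, e i i x * e i i x ∂(stdGaussian d) + ∫ x, e j j x * e j j x ∂(stdGaussian d) =
      6 * ∫ x, e i j x * e i j x ∂(stdGaussian d) := by
  have h := integral_comp (rot i j) (rot_sq i j hij) (fun x => e i j x * e i j x)
    ((measurable_e i j).mul (measurable_e i j))
  simp_rw [ee_rot i j hij] at h
  rw [integral_sub, integral_add] at h
  · simp_rw [integral_const_mul] at h
    linarith
  · exact (int_ee _ _ _ _).const_mul _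
  · exact (int_ee _ _ _ _).const_mul _
  · exact ((int_ee _ _ _ _).const_mul _).add ((int_ee _ _ _ _).const_mul _)
  · exact (int_ee _ _ _ _).const_mul _

lemma swap_eq {d : ℕ} (i j : Fin d) :
    ∫ x, e i i x * e i i x ∂(stdGaussian d) = ∫ x, e j j x * e j j x ∂(stdGaussian d) := by
  have hs : ∀ x : Fin d → ℝ, ∑ k, (LinearMap.funLeft ℝ ℝ (Equiv.swap i j)) x k ^ 2
      = ∑ k, x k ^ 2 := fun x => Equiv.sum_comp (Equiv.swap i j) (fun k => x k ^ 2)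
  rw [← integral_comp (LinearMap.funLeft ℝ ℝ (Equiv.swap i j)) hs (fun x => e i i x * e i i x)
    ((measurable_e i i).mul (measurable_e i i))]
  congr 1
  ext x
  unfold e
  rw [vnorm_congr (hs x)]
  simp [LinearMap.funLeft_apply]

lemma e_mul_comm {d : ℕ} (i j : Fin d) (x : Fin d → ℝ) :
    e i i x * e j j x = e i j x * e i j x := by unfold e; ring

lemma n_mul_e {d : ℕ} (i j : Fin d) (x : Fin d → ℝ) : vnorm x * e i j x = x i * x j := by
  unfold e
  by_cases h : vnorm x = 0
  · have := abs_le_vnorm x i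
    rw [h] at this
    have h0 : x i = 0 := abs_nonpos_iff.1 this
    simp [h, h0]
  · field_simp

lemma sum_e {d : ℕ} (x : Fin d → ℝ) : ∑ j, e j j x = vnorm x := by
  unfold e
  rw [← Finset.sum_div]
  simp_rw [← pow_two]
  rw [← vnorm_sq, pow_two, mul_self_div_self]

lemma I_nn {d : ℕ} : ∫ x : Fin d → ℝ, vnorm x * vnorm x ∂(stdGaussian d) = d := by
  simp_rw [← pow_two, vnorm_sq]
  rw [integral_finsetSum _ fun i _ => integrable_sq i]
  simp [integral_sq]

lemma I_ne {d : ℕ} (i : Fin d) : ∫ x, vnorm x * e i i x ∂(stdGaussian d) = 1 := by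
  simp_rw [n_mul_e, ← pow_two]
  exact integral_sq i

lemma I_diag {d : ℕ} (i : Fin d) :
    ∫ x, e i i x * e i i x ∂(stdGaussian d) = 3 / (d + 2) := by
  have h : ∑ j, ∫ x, e j j x * e i i x ∂(stdGaussian d) = 1 := by
    rw [← integral_finsetSum _ fun j _ => int_ee j j i i]
    simp_rw [← Finset.sum_mul, sum_e]
    exact I_ne i
  set A := ∫ x, e i i x * e i i x ∂(stdGaussian d) with hA
  have hB : ∀ j, ∫ x, e j j x * e i i x ∂(stdGaussian d) =
      A / 3 + if j = i then 2 * A / 3 else 0 := by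
    intro j
    split_ifs with hj
    · subst hj; rw [← hA]; ring
    · have := six j i hj
      rw [swap_eq j i, ← hA] at this
      simp_rw [e_mul_comm j i]
      linarith
  simp_rw [hB] at h
  rw [Finset.sum_add_distrib] at h
  simp at h
  field_simp at h ⊢
  linarith

lemma I_off {d : ℕ} (i j : Fin d) (hij : i ≠ j) :
    ∫ x, e i j x * e i j x ∂(stdGaussian d) = 1 / (d + 2) := by
  have := six i j hij
  rw [I_diag, I_diag] at this
  have h2 : (3 : ℝ) / (d + 2) = 3 * (1 / (d + 2)) := by ring
  rw [h2] at this; linarith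

lemma I_dd {d : ℕ} (i j : Fin d) :
    ∫ x, e i i x * e j j x ∂(stdGaussian d) = (1 + if i = j then 2 else 0) / (d + 2) := by
  split_ifs with h
  · subst h; rw [I_diag]; norm_num
  · simp_rw [e_mul_comm i j]; rw [I_off i j h]; norm_num

lemma e_flip {d : ℕ} (k a b : Fin d) (x : Fin d → ℝ) :
    e a b (flip k x) = (if a = k then -1 else 1) * (if b = k then -1 else 1) * e a b x := by
  unfold e
  rw [vnorm_congr (flip_sq k x), flip_apply, flip_apply]
  split_ifs <;> ring

lemma I_n_off {d : ℕ} (a b : Fin d) (h : a ≠ b) :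
    ∫ x, vnorm x * e a b x ∂(stdGaussian d) = 0 := by
  refine integral_zero_of_odd (flip a) (flip_sq a) _ (measurable_vnorm.mul (measurable_e a b)) ?_
  intro x
  rw [vnorm_congr (flip_sq a x), e_flip]; simp [h.symm]

lemma I_d_off {d : ℕ} (i a b : Fin d) (h : a ≠ b) :
    ∫ x, e i i x * e a b x ∂(stdGaussian d) = 0 := by
  refine integral_zero_of_odd (flip a) (flip_sq a) _ ((measurable_e i i).mul (measurable_e a b)) ?_
  intro x
  rw [e_flip, e_flip]; split_ifs <;> simp_all

lemma I_off_off {d : ℕ} (a b a' b' : Fin d) (h : a < b) (h' : a' < b') (hne : ¬ (a = a' ∧ b = b')) :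
    ∫ x, e a b x * e a' b' x ∂(stdGaussian d) = 0 := by
  by_cases h1 : a' = a ∨ b' = a
  · have h2 : a' ≠ b ∧ b' ≠ b := by
      constructor
      · rintro rfl; rcases h1 with h1 | h1
        · exact absurd h1 h.ne'
        · subst h1; exact absurd h h'.not_gt
      · rintro rfl; rcases h1 with h1 | h1
        · exact hne ⟨h1.symm, rfl⟩
        · exact absurd h1 h.ne'
    refine integral_zero_of_odd (flip b) (flip_sq b) _
      ((measurable_e a b).mul (measurable_e a' b')) ?_
    intro x
    rw [e_flip, e_flip]; simp [h.ne, h2.1, h2.2]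
  · push Not at h1
    refine integral_zero_of_odd (flip a) (flip_sq a) _
      ((measurable_e a b).mul (measurable_e a' b')) ?_
    intro x
    rw [e_flip, e_flip]; simp [h.ne', h1.1, h1.2]

/-- The last index. -/
def lst (d : ℕ) (hd : 0 < d) : Fin d := ⟨d - 1, Nat.sub_lt hd one_pos⟩

/-- The constant in front of the last coordinate. -/
noncomputable def cc (d : ℕ) : ℝ := 1 / (√(d : ℝ) + 1)

lemma Fgam_eq (d : ℕ) (hd : 0 < d) (γ : Fin d) (x : Fin d → ℝ) :
    Fgam d hd γ x = √((d : ℝ) + 2) / √2 *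
      (e γ γ x - cc d * e (lst d hd) (lst d hd) x - (1 - cc d) / d * vnorm x) := by
  unfold Fgam e cc lst; ring

lemma Fab_eq (d : ℕ) (a b : Fin d) (x : Fin d → ℝ) :
    Fab d a b x = √((d : ℝ) + 2) * e a b x := by
  unfold Fab e; ring

lemma measurable_Fam (d : ℕ) (hd : 2 ≤ d) (i : FamIdx d) : Measurable (Fam d hd i) := by
  have h1 := measurable_vnorm (d := d)
  rcases i with _ | l | γ | p
  · show Measurable (fun x : Fin d → ℝ => vnorm x / √d); fun_prop
  · show Measurable (fun x : Fin d → ℝ => x l); fun_prop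
  · show Measurable (Fgam d (by omega) _)
    unfold Fgam; fun_prop
  · show Measurable (Fab d _ _)
    unfold Fab; fun_prop

/-- The inner product of a general even function against `h`. -/
lemma integral_comb {d : ℕ} (g k : Fin d) (C c r : ℝ) (h : (Fin d → ℝ) → ℝ)
    (hh : MemLp h 2 (stdGaussian d)) :
    ∫ x, C * (e g g x - c * e k k x - r * vnorm x) * h x ∂(stdGaussian d) =
      C * (∫ x, e g g x * h x ∂(stdGaussian d) - c * ∫ x, e k k x * h x ∂(stdGaussian d)
        - r * ∫ x, vnorm x * h x ∂(stdGaussian d)) := by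
  have i1 : Integrable (fun x => e g g x * h x) (stdGaussian d) := (memLp_e g g).integrable_mul hh
  have i2 : Integrable (fun x => e k k x * h x) (stdGaussian d) := (memLp_e k k).integrable_mul hh
  have i3 : Integrable (fun x => vnorm x * h x) (stdGaussian d) := memLp_vnorm.integrable_mul hh
  have i4 : Integrable (fun x => e g g x * h x - c * (e k k x * h x)) (stdGaussian d) :=
    i1.sub (i2.const_mul c)
  rw [← integral_const_mul, ← integral_const_mul, ← integral_sub i1 (i2.const_mul c),
    ← integral_sub i4 (i3.const_mul r), ← integral_const_mul]
  congr 1; ext x; ring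

lemma gam_n (d : ℕ) (hd : 0 < d) (γ : Fin d) :
    ∫ x, Fgam d hd γ x * vnorm x ∂(stdGaussian d) = 0 := by
  simp_rw [Fgam_eq]
  rw [integral_comb _ _ _ _ _ _ memLp_vnorm]
  simp_rw [mul_comm (e _ _ _) (vnorm _)]
  rw [I_ne, I_ne, I_nn]
  have : (d : ℝ) ≠ 0 := by positivity
  field_simp; ring

lemma gam_off (d : ℕ) (hd : 0 < d) (γ a b : Fin d) (h : a ≠ b) :
    ∫ x, Fgam d hd γ x * e a b x ∂(stdGaussian d) = 0 := by
  simp_rw [Fgam_eq]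
  rw [integral_comb _ _ _ _ _ _ (memLp_e a b), I_d_off _ _ _ h, I_d_off _ _ _ h, I_n_off _ _ h]
  ring

lemma gam_d (d : ℕ) (hd : 0 < d) (γ i : Fin d) :
    ∫ x, Fgam d hd γ x * e i i x ∂(stdGaussian d) = √((d : ℝ) + 2) / √2 *
      ((1 + if γ = i then 2 else 0) / (d + 2) - cc d * ((1 + if lst d hd = i then 2 else 0) / (d + 2))
        - (1 - cc d) / d) := by
  simp_rw [Fgam_eq]
  rw [integral_comb _ _ _ _ _ _ (memLp_e i i), I_dd, I_dd, I_ne, mul_one]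

lemma memLp_gam (d : ℕ) (hd : 0 < d) (γ : Fin d) : MemLp (Fgam d hd γ) 2 (stdGaussian d) := by
  have : Fgam d hd γ = fun x => √((d : ℝ) + 2) / √2 *
      (e γ γ x - cc d * e (lst d hd) (lst d hd) x - (1 - cc d) / d * vnorm x) := by
    ext x; exact Fgam_eq d hd γ x
  rw [this]
  exact (((memLp_e _ _).sub ((memLp_e _ _).const_mul _)).sub (memLp_vnorm.const_mul _)).const_mul _

lemma gam_gam (d : ℕ) (hd : 0 < d) (γ δ : Fin d) (hγ : γ ≠ lst d hd) (hδ : δ ≠ lst d hd) :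
    ∫ x, Fgam d hd γ x * Fgam d hd δ x ∂(stdGaussian d) = if γ = δ then 1 else 0 := by
  have h : ∀ x, Fgam d hd γ x * Fgam d hd δ x = √((d : ℝ) + 2) / √2 *
      (e γ γ x - cc d * e (lst d hd) (lst d hd) x - (1 - cc d) / d * vnorm x) * Fgam d hd δ x := by
    intro x; rw [Fgam_eq d hd γ x]
  simp_rw [h]
  rw [integral_comb _ _ _ _ _ _ (memLp_gam d hd δ)]
  simp_rw [mul_comm (e _ _ _) (Fgam _ _ _ _), mul_comm (vnorm _) (Fgam _ _ _ _)]
  rw [gam_d, gam_d, gam_n]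
  simp only [hδ, hγ.symm, if_true, if_false]
  have hC : (√((d : ℝ) + 2) / √2) * (√((d : ℝ) + 2) / √2) = (d + 2) / 2 := by
    rw [div_mul_div_comm, Real.mul_self_sqrt (by positivity), Real.mul_self_sqrt (by positivity)]
  have hc : -1 + 2 * cc d + cc d ^ 2 * (d - 1) = 0 := by
    have hs : √(d : ℝ) ^ 2 = d := Real.sq_sqrt (by positivity)
    have hp : √(d : ℝ) + 1 ≠ 0 := by positivity
    unfold cc
    nth_rewrite 3 [← hs]
    field_simp; ring
  have hd0 : (d : ℝ) ≠ 0 := by positivity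
  have hd2 : (d : ℝ) + 2 ≠ 0 := by positivity
  generalize cc d = c at *
  generalize √((d : ℝ) + 2) / √2 = C at *
  have e1 : ∀ u v : ℝ, C * (C * u - c * (C * v) - (1 - c) / d * 0) = (d + 2) / 2 * (u - c * v) := by
    intro u v; rw [← hC]; ring
  rw [e1]
  simp only [eq_comm (a := δ) (b := γ)]
  split_ifs
  · field_simp
    linear_combination 2 * hc
  · field_simp
    linear_combination 2 * hc

lemma symm_int (d : ℕ) (f g : (Fin d → ℝ) → ℝ) :
    ∫ x, f x * g x ∂(stdGaussian d) = ∫ x, g x * f x ∂(stdGaussian d) := by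
  simp_rw [mul_comm]

lemma neg_sq_sum {d : ℕ} (x : Fin d → ℝ) :
    ∑ i, (-LinearMap.id : (Fin d → ℝ) →ₗ[ℝ] (Fin d → ℝ)) x i ^ 2 = ∑ i, x i ^ 2 := by simp

lemma l_even (d : ℕ) (l : Fin d) (f : (Fin d → ℝ) → ℝ) (hf : Measurable f)
    (h : ∀ x, f (-x) = f x) : ∫ x, Fl d l x * f x ∂(stdGaussian d) = 0 := by
  refine integral_zero_of_odd (-LinearMap.id) neg_sq_sum _ ?_ ?_
  · unfold Fl; fun_prop
  · intro x
    simp [Fl, h]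

lemma vnorm_neg {d : ℕ} (x : Fin d → ℝ) : vnorm (-x) = vnorm x := by simp [vnorm]

lemma l_l (d : ℕ) (l m : Fin d) :
    ∫ x, Fl d l x * Fl d m x ∂(stdGaussian d) = if l = m then 1 else 0 := by
  unfold Fl
  simp_rw [← n_mul_e]
  split_ifs with h
  · subst h; exact I_ne l
  · exact I_n_off _ _ h

lemma zero_zero (d : ℕ) (hd : 0 < d) : ∫ x, F0 d x * F0 d x ∂(stdGaussian d) = 1 := by
  have : ∀ x, F0 d x * F0 d x = (1 / d) * (vnorm x * vnorm x) := by
    intro x; unfold F0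
    rw [div_mul_div_comm, Real.mul_self_sqrt (by positivity)]; ring
  simp_rw [this]
  rw [integral_const_mul, I_nn]
  have hd0 : (d : ℝ) ≠ 0 := by positivity
  field_simp

lemma zero_gam (d : ℕ) (hd : 0 < d) (γ : Fin d) :
    ∫ x, F0 d x * Fgam d hd γ x ∂(stdGaussian d) = 0 := by
  have : ∀ x, F0 d x * Fgam d hd γ x = (1 / √d) * (Fgam d hd γ x * vnorm x) := by
    intro x; unfold F0; ring
  simp_rw [this]
  rw [integral_const_mul, gam_n, mul_zero]

lemma zero_ab (d : ℕ) (a b : Fin d) (h : a ≠ b) :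
    ∫ x, F0 d x * Fab d a b x ∂(stdGaussian d) = 0 := by
  have : ∀ x, F0 d x * Fab d a b x = (1 / √d * √((d : ℝ) + 2)) * (vnorm x * e a b x) := by
    intro x; rw [Fab_eq]; unfold F0; ring
  simp_rw [this]
  rw [integral_const_mul, I_n_off a b h, mul_zero]

lemma gam_ab (d : ℕ) (hd : 0 < d) (γ a b : Fin d) (h : a ≠ b) :
    ∫ x, Fgam d hd γ x * Fab d a b x ∂(stdGaussian d) = 0 := by
  have : ∀ x, Fgam d hd γ x * Fab d a b x = √((d : ℝ) + 2) * (Fgam d hd γ x * e a b x) := by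
    intro x; rw [Fab_eq]; ring
  simp_rw [this]
  rw [integral_const_mul, gam_off d hd γ a b h, mul_zero]

lemma ab_ab (d : ℕ) (a b a' b' : Fin d) (h : a < b) (h' : a' < b') :
    ∫ x, Fab d a b x * Fab d a' b' x ∂(stdGaussian d) = if a = a' ∧ b = b' then 1 else 0 := by
  have : ∀ x, Fab d a b x * Fab d a' b' x = ((d : ℝ) + 2) * (e a b x * e a' b' x) := by
    intro x; rw [Fab_eq, Fab_eq]
    rw [← Real.mul_self_sqrt (show (0 : ℝ) ≤ (d : ℝ) + 2 by positivity)]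
    simp only [Real.sqrt_mul_self (Real.sqrt_nonneg _)]
    ring
  simp_rw [this]
  rw [integral_const_mul]
  split_ifs with hh
  · obtain ⟨rfl, rfl⟩ := hh
    rw [I_off a b h.ne]
    have hd2 : (d : ℝ) + 2 ≠ 0 := by positivity
    field_simp
  · rw [I_off_off a b a' b' h h' hh, mul_zero]

end FamAux

open FamAux in
theorem family_orthonormal (d : ℕ) (hd : 2 ≤ d) (i j : FamIdx d) :
    ∫ x, Fam d hd i x * Fam d hd j x ∂ stdGaussian d = if i = j then 1 else 0 := by
  have hd0 : 0 < d := by omega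
  have hev : ∀ i : FamIdx d, (∀ l, i ≠ Sum.inr (Sum.inl l)) →
      ∀ x, Fam d hd i (-x) = Fam d hd i x := by
    intro i hi x
    rcases i with _ | l | γ | p
    · simp [Fam, F0, FamAux.vnorm_neg]
    · exact absurd rfl (hi l)
    · simp [Fam, Fgam, FamAux.vnorm_neg]
    · simp [Fam, Fab, FamAux.vnorm_neg]
  have hl : ∀ (l : Fin d) (i : FamIdx d), (∀ l, i ≠ Sum.inr (Sum.inl l)) →
      ∫ x, Fam d hd (Sum.inr (Sum.inl l)) x * Fam d hd i x ∂ stdGaussian d = 0 := fun l i hi =>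
    l_even d l _ (measurable_Fam d hd i) (hev i hi)
  have hlast : ∀ γ : Fin (d - 1), Fin.castLE (Nat.sub_le d 1) γ ≠ lst d hd0 := by
    intro γ h
    have := congrArg Fin.val h
    simp [lst] at this
    omega
  rcases i with u | l | γ | p <;> rcases j with v | m | δ | q
  · simpa [Fam] using zero_zero d hd0
  · rw [symm_int]; simpa using hl m (Sum.inl u) (by simp)
  · simpa [Fam] using zero_gam d hd0 _
  · simpa [Fam] using zero_ab d _ _ q.2.ne
  · simpa using hl l (Sum.inl v) (by simp)
  · simpa [Fam] using l_l d l m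
  · simpa using hl l (Sum.inr (Sum.inr (Sum.inl δ))) (by simp)
  · simpa using hl l (Sum.inr (Sum.inr (Sum.inr q))) (by simp)
  · rw [symm_int]; simpa [Fam] using zero_gam d hd0 _
  · rw [symm_int]; simpa using hl m (Sum.inr (Sum.inr (Sum.inl γ))) (by simp)
  · simpa [Fam] using gam_gam d hd0 _ _ (hlast γ) (hlast δ)
  · simpa [Fam] using gam_ab d hd0 _ _ _ q.2.ne
  · rw [symm_int]; simpa [Fam] using zero_ab d _ _ p.2.ne
  · rw [symm_int]; simpa using hl m (Sum.inr (Sum.inr (Sum.inr p))) (by simp)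
  · rw [symm_int]; simpa [Fam] using gam_ab d hd0 _ _ _ p.2.ne
  · simpa [Fam, Subtype.ext_iff, Prod.ext_iff] using ab_ab d _ _ _ _ p.2 q.2
end

section
/- Let d ≥ 2, let γ_d be the standard Gaussian measure on ℝ^d, define g_γ(x) = x_γ²/|x| − |x|/d for 1 ≤ γ ≤ d (x ≠ 0), and define h_γ = g_γ − g_d/(√d + 1) for 1 ≤ γ ≤ d−1. Then for all 1 ≤ γ, γ' ≤ d−1: ∫ h_γ(x)·h_{γ'}(x) dγ_d(x) = (2/(d+2))·δ_{γγ'}, where δ_{γγ'} is the Kronecker delta. In particular the functions h_1,…,h_{d−1} are mutually orthogonal in L²(γ_d) with common squared norm 2/(d+2). -/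
open MeasureTheory Real

/-- `g_γ(x) = x_γ²/|x| − |x|/d`. -/
noncomputable def gfun (d : ℕ) (γ : Fin d) (x : Fin d → ℝ) : ℝ :=
  x γ ^ 2 / vnorm x - vnorm x / d

/-- `h_γ = g_γ − g_d/(√d + 1)`, where `g_d` uses the last coordinate. -/
noncomputable def hfun (d : ℕ) (hd : 0 < d) (γ : Fin d) (x : Fin d → ℝ) : ℝ :=
  gfun d γ x - gfun d ⟨d - 1, Nat.sub_lt hd one_pos⟩ x / (Real.sqrt d + 1)

open ProbabilityTheory hiding stdGaussian

/-- Orthogonal transformation of the `(i,j)` plane. -/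
noncomputable def planeMap {d : ℕ} (i j : Fin d) (a b : ℝ) (x : Fin d → ℝ) : Fin d → ℝ :=
  fun k => if k = i then a * x i + b * x j else if k = j then b * x i - a * x j else x k

lemma planeMap_sq {d : ℕ} {i j : Fin d} (hij : i ≠ j) {a b : ℝ} (hab : a ^ 2 + b ^ 2 = 1)
    (x : Fin d → ℝ) : ∑ k, planeMap i j a b x k ^ 2 = ∑ k, x k ^ 2 := by
  have key : ∀ y : Fin d → ℝ, ∑ k, y k ^ 2
      = y i ^ 2 + (y j ^ 2 + ∑ k ∈ (Finset.univ.erase i).erase j, y k ^ 2) := by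
    intro y
    rw [Finset.add_sum_erase _ (fun k => y k ^ 2) (by simp [hij.symm]),
      Finset.add_sum_erase _ (fun k => y k ^ 2) (by simp)]
  rw [key, key x]
  have h1 : ∑ k ∈ (Finset.univ.erase i).erase j, planeMap i j a b x k ^ 2
      = ∑ k ∈ (Finset.univ.erase i).erase j, x k ^ 2 := by
    apply Finset.sum_congr rfl
    intro k hk
    simp only [Finset.mem_erase, Finset.mem_univ, and_true] at hk
    simp [planeMap, hk.1, hk.2]
  rw [h1]
  simp only [planeMap, if_true, hij.symm, if_false]
  linear_combination (x i ^ 2 + x j ^ 2) * hab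

lemma planeMap_mp {d : ℕ} {i j : Fin d} (hij : i ≠ j) {a b : ℝ} (hab : a ^ 2 + b ^ 2 = 1) :
    MeasurePreserving (planeMap i j a b) (stdGaussian d) (stdGaussian d) := by
  let L : EuclideanSpace ℝ (Fin d) →ₗ[ℝ] EuclideanSpace ℝ (Fin d) :=
    { toFun := fun x => WithLp.toLp 2 (planeMap i j a b (WithLp.ofLp x))
      map_add' := by
        intro x y
        ext k
        simp only [planeMap, WithLp.ofLp_add, Pi.add_apply]
        split_ifs <;> ring
      map_smul' := by
        intro c x
        ext k
        simp only [planeMap, WithLp.ofLp_smul, Pi.smul_apply, smul_eq_mul, RingHom.id_apply]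
        split_ifs <;> ring }
  let L' : EuclideanSpace ℝ (Fin d) →ₗᵢ[ℝ] EuclideanSpace ℝ (Fin d) :=
    { toLinearMap := L
      norm_map' := by
        intro x
        simp only [EuclideanSpace.norm_eq, Real.norm_eq_abs, sq_abs]
        congr 1
        exact planeMap_sq hij hab _ }
  let e := L'.toLinearIsometryEquiv rfl
  have hm : Measurable (planeMap i j a b : (Fin d → ℝ) → Fin d → ℝ) := by
    refine measurable_pi_lambda _ fun k => ?_
    unfold planeMap
    split_ifs <;> fun_prop
  refine ⟨hm, ?_⟩
  have h1 := map_pi_eq_stdGaussian (ι := Fin d)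
  have h2 := ProbabilityTheory.stdGaussian_map e
  have h3 : planeMap i j a b = fun x : Fin d → ℝ => WithLp.ofLp (e (WithLp.toLp 2 x)) := rfl
  have h4 : stdGaussian d
      = (ProbabilityTheory.stdGaussian (EuclideanSpace ℝ (Fin d))).map WithLp.ofLp := by
    rw [← h1, Measure.map_map (by fun_prop) (by fun_prop)]
    exact Measure.map_id.symm
  have h5 : (stdGaussian d).map (WithLp.toLp 2)
    = ProbabilityTheory.stdGaussian (EuclideanSpace ℝ (Fin d)) := h1
  have h6 : planeMap i j a b = WithLp.ofLp ∘ (e ∘ (WithLp.toLp 2 : (Fin d → ℝ) → _)) := rfl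
  rw [h6, ← Measure.map_map (by fun_prop) (by fun_prop),
    ← Measure.map_map (by fun_prop) (by fun_prop), h5, h2, ← h4]

/-- The normalised quartic. -/
noncomputable def qf {d : ℕ} (i j : Fin d) (x : Fin d → ℝ) : ℝ :=
  x i ^ 2 * x j ^ 2 / ∑ k, x k ^ 2

instance (d : ℕ) : IsProbabilityMeasure (stdGaussian d) := by
  unfold stdGaussian; infer_instance

lemma integrable_sq (d : ℕ) (i : Fin d) : Integrable (fun x => x i ^ 2) (stdGaussian d) := by
  have h := (memLp_id_gaussianReal (μ := 0) (v := 1) 2).integrable_sq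
  exact integrable_comp_eval (μ := fun _ : Fin d => gaussianReal 0 1) (i := i) h

lemma integral_sq (d : ℕ) (i : Fin d) : ∫ x, x i ^ 2 ∂(stdGaussian d) = 1 := by
  have h : ∫ x, x i ^ 2 ∂(stdGaussian d) = ∫ t, t ^ 2 ∂(gaussianReal 0 1) := by
    have hp := measurePreserving_eval (fun _ : Fin d => gaussianReal 0 1) i
    rw [← hp.map_eq, integral_map (measurable_pi_apply i).aemeasurable (by fun_prop)]
    rfl
  rw [h]
  have hv := variance_id_gaussianReal (μ := 0) (v := 1)
  rw [variance_eq_integral (by fun_prop)] at hv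
  simpa using hv

lemma sq_le_S {d : ℕ} (i : Fin d) (x : Fin d → ℝ) : x i ^ 2 ≤ ∑ k, x k ^ 2 :=
  Finset.single_le_sum (f := fun k => x k ^ 2) (fun k _ => sq_nonneg (x k)) (Finset.mem_univ i)

lemma qf_integrable {d : ℕ} (i j : Fin d) : Integrable (qf i j) (stdGaussian d) := by
  refine (integrable_sq d i).mono' (Measurable.aestronglyMeasurable (by unfold qf; fun_prop)) (Filter.Eventually.of_forall fun x => ?_)
  have hS : 0 ≤ ∑ k, x k ^ 2 := Finset.sum_nonneg fun k _ => sq_nonneg _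
  rw [Real.norm_eq_abs, abs_of_nonneg (by unfold qf; positivity)]
  unfold qf
  apply div_le_of_le_mul₀ hS (sq_nonneg _)
  exact mul_le_mul_of_nonneg_left (sq_le_S j x) (sq_nonneg _)

lemma qf_diag {d : ℕ} (i j : Fin d) :
    ∫ x, qf i i x ∂(stdGaussian d) = ∫ x, qf j j x ∂(stdGaussian d) := by
  by_cases hij : i = j
  · rw [hij]
  have hmp := planeMap_mp hij (a := 0) (b := 1) (by norm_num)
  have hF : AEStronglyMeasurable (qf i i) (stdGaussian d) := (qf_integrable i i).1
  conv_lhs => rw [← hmp.map_eq]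
  rw [integral_map hmp.aemeasurable (by rw [hmp.map_eq]; exact hF)]
  congr 1
  ext x
  unfold qf
  rw [planeMap_sq hij (by norm_num)]
  simp [planeMap]

lemma qf_off {d : ℕ} {i j : Fin d} (hij : i ≠ j) :
    ∫ x, qf i j x ∂(stdGaussian d) = (∫ x, qf i i x ∂(stdGaussian d)) / 3 := by
  have hs : (√2 / 2) ^ 2 = (1 : ℝ) / 2 := by
    rw [div_pow, Real.sq_sqrt (by norm_num)]; norm_num
  have hab : (√2 / 2) ^ 2 + (√2 / 2) ^ 2 = (1 : ℝ) := by rw [hs]; norm_num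
  have hmp := planeMap_mp hij hab
  have hF : AEStronglyMeasurable (qf i j) (stdGaussian d) := (qf_integrable i j).1
  have h : ∫ x, qf i j x ∂(stdGaussian d)
      = ∫ x, (1/4 : ℝ) * (qf i i x + qf j j x - 2 * qf i j x) ∂(stdGaussian d) := by
    conv_lhs => rw [← hmp.map_eq]
    rw [integral_map hmp.aemeasurable (by rw [hmp.map_eq]; exact hF)]
    congr 1
    ext x
    unfold qf
    rw [planeMap_sq hij hab]
    simp only [planeMap, if_true, hij.symm, if_false]
    have h1 : (√2 / 2 * x i + √2 / 2 * x j) ^ 2 * (√2 / 2 * x i - √2 / 2 * x j) ^ 2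
      = (1/4) * (x i ^ 2 * x i ^ 2 + x j ^ 2 * x j ^ 2 - 2 * (x i ^ 2 * x j ^ 2)) := by
      have : (√2 / 2 * x i + √2 / 2 * x j) ^ 2 * (√2 / 2 * x i - √2 / 2 * x j) ^ 2
        = ((√2 / 2) ^ 2) ^ 2 * ((x i + x j) * (x i - x j)) ^ 2 := by ring
      rw [this, hs]; ring
    rw [h1]; ring
  rw [integral_const_mul, integral_sub ((qf_integrable i i).fun_add (qf_integrable j j))
    ((qf_integrable i j).const_mul 2), integral_add (qf_integrable i i) (qf_integrable j j),
    integral_const_mul, qf_diag j i] at h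
  linarith

lemma qf_ii {d : ℕ} (i : Fin d) :
    ∫ x, qf i i x ∂(stdGaussian d) = 3 / ((d : ℝ) + 2) := by
  have h : ∑ j, ∫ x, qf i j x ∂(stdGaussian d) = 1 := by
    rw [← integral_finsetSum _ (fun j _ => qf_integrable i j), ← integral_sq d i]
    congr 1
    ext x
    unfold qf
    rw [← Finset.sum_div, ← Finset.mul_sum]
    by_cases hS : ∑ k, x k ^ 2 = 0
    · have := sq_le_S i x
      have h0 : x i ^ 2 = 0 := le_antisymm (hS ▸ this) (sq_nonneg _)
      rw [hS, h0]; simp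
    · field_simp
  rw [← Finset.add_sum_erase _ _ (Finset.mem_univ i),
    Finset.sum_congr rfl (fun j hj => qf_off (Finset.ne_of_mem_erase hj).symm)] at h
  rw [Finset.sum_const, Finset.card_erase_of_mem (Finset.mem_univ i), Finset.card_univ,
    Fintype.card_fin, nsmul_eq_mul, Nat.cast_sub (Nat.one_le_iff_ne_zero.2 (by
      have := i.2; omega))] at h
  push_cast at h
  rw [eq_div_iff (by positivity)]
  linarith

lemma g_mul {d : ℕ} (i j : Fin d) (x : Fin d → ℝ) :
    gfun d i x * gfun d j x = qf i j x - (x i ^ 2 + x j ^ 2) / d + (∑ k, x k ^ 2) / (d : ℝ) ^ 2 := by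
  unfold gfun qf vnorm
  have hS : 0 ≤ ∑ k, x k ^ 2 := Finset.sum_nonneg fun k _ => sq_nonneg _
  have hi := sq_le_S i x
  have hj := sq_le_S j x
  have hi0 := sq_nonneg (x i)
  have hj0 := sq_nonneg (x j)
  have hd : (d : ℝ) ≠ 0 := by
    have := i.2
    exact_mod_cast (by omega : d ≠ 0)
  generalize ∑ k, x k ^ 2 = S at *
  rcases hS.eq_or_lt with h0 | h0
  · subst h0
    have h1 : x i ^ 2 = 0 := le_antisymm hi hi0
    have h2 : x j ^ 2 = 0 := le_antisymm hj hj0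
    rw [h1, h2]; simp
  · have hr : 0 < √S := Real.sqrt_pos.2 h0
    have hrs : S = √S ^ 2 := (Real.sq_sqrt hS).symm
    generalize √S = r at *
    subst hrs
    field_simp
    ring

lemma g_int {d : ℕ} (i j : Fin d) : Integrable (fun x => gfun d i x * gfun d j x) (stdGaussian d) ∧
    ∫ x, gfun d i x * gfun d j x ∂(stdGaussian d)
      = 2 / ((d : ℝ) + 2) * ((if i = j then 1 else 0) - 1 / d) := by
  simp only [g_mul]
  have hS : Integrable (fun x : Fin d → ℝ => ∑ k, x k ^ 2) (stdGaussian d) :=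
    integrable_finsetSum _ fun k _ => integrable_sq d k
  have hij : Integrable (fun x : Fin d → ℝ => (x i ^ 2 + x j ^ 2) / d) (stdGaussian d) :=
    ((integrable_sq d i).add (integrable_sq d j)).div_const _
  refine ⟨((qf_integrable i j).sub hij).add (hS.div_const _), ?_⟩
  rw [integral_add ((qf_integrable i j).sub' hij) (hS.div_const _),
    integral_sub (qf_integrable i j) hij, integral_div, integral_div,
    integral_add (integrable_sq d i) (integrable_sq d j),
    integral_finsetSum _ fun k _ => integrable_sq d k]
  simp only [integral_sq]
  have hd : (d : ℝ) ≠ 0 := by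
    have := i.2
    exact_mod_cast (by omega : d ≠ 0)
  have hd2 : (d : ℝ) + 2 ≠ 0 := by positivity
  simp only [Finset.sum_const, Finset.card_univ, Fintype.card_fin, nsmul_eq_mul, mul_one]
  split_ifs with h
  · subst h
    rw [qf_ii]
    field_simp
    ring
  · rw [qf_off h, qf_ii]
    field_simp
    ring

/-- One-based indices `1 ≤ γ, γ' ≤ d−1` correspond to zero-based indices `< d−1`. -/
theorem hfun_orthogonal (d : ℕ) (hd : 2 ≤ d) (γ γ' : Fin d)
    (hγ : (γ : ℕ) < d - 1) (hγ' : (γ' : ℕ) < d - 1) :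
    ∫ x, hfun d (by omega) γ x * hfun d (by omega) γ' x ∂ stdGaussian d
      = if γ = γ' then 2 / ((d : ℝ) + 2) else 0 := by
  unfold hfun
  generalize hl : (⟨d - 1, Nat.sub_lt (by omega) one_pos⟩ : Fin d) = l
  have h1 : γ ≠ l := by rw [← hl]; intro h; rw [h] at hγ; simp at hγ
  have h2 : γ' ≠ l := by rw [← hl]; intro h; rw [h] at hγ'; simp at hγ'
  set c : ℝ := √d + 1 with hc
  have hcpos : 0 < c := by positivity
  have e : ∀ x : Fin d → ℝ, (gfun d γ x - gfun d l x / c) * (gfun d γ' x - gfun d l x / c)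
      = gfun d γ x * gfun d γ' x - (1 / c) * (gfun d γ x * gfun d l x)
        - (1 / c) * (gfun d γ' x * gfun d l x) + (1 / c) ^ 2 * (gfun d l x * gfun d l x) := by
    intro x; ring
  simp only [e]
  have i1 := (g_int γ γ').1
  have i2 := (g_int γ l).1.const_mul (1 / c)
  have i3 := (g_int γ' l).1.const_mul (1 / c)
  have i4 := (g_int l l).1.const_mul ((1 / c) ^ 2)
  rw [integral_add ((i1.sub' i2).sub' i3) i4, integral_sub (i1.sub' i2) i3, integral_sub i1 i2]
  simp only [integral_const_mul]
  rw [(g_int γ γ').2, (g_int γ l).2, (g_int γ' l).2, (g_int l l).2, if_neg h1, if_neg h2, if_pos rfl]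
  have hdpos : (0 : ℝ) < d := by exact_mod_cast (by omega : 0 < d)
  have hcd : (d : ℝ) = (c - 1) ^ 2 := by
    rw [hc, add_sub_cancel_right, Real.sq_sqrt hdpos.le]
  have hc1 : c - 1 ≠ 0 := by
    intro h; rw [h] at hcd; simp at hcd; linarith
  have key : -(1 / (d : ℝ)) - 1 / c * (0 - 1 / d) - 1 / c * (0 - 1 / d)
      + (1 / c) ^ 2 * (1 - 1 / d) = 0 := by
    rw [hcd]; field_simp; ring
  have : ∀ δ : ℝ, 2 / ((d : ℝ) + 2) * (δ - 1 / d) - 1 / c * (2 / ((d : ℝ) + 2) * (0 - 1 / d))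
      - 1 / c * (2 / ((d : ℝ) + 2) * (0 - 1 / d))
      + (1 / c) ^ 2 * (2 / ((d : ℝ) + 2) * (1 - 1 / d)) = 2 / ((d : ℝ) + 2) * δ := by
    intro δ
    linear_combination 2 / ((d : ℝ) + 2) * key
  rw [this]
  split_ifs <;> simp
end
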